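/- arXiv:1311.1594 — 10 statements merged into one kernel-verified Lean document; each statement's English description precedes it below -/
import Mathlib

section
/- Let v be a sequence with k ≥ ||v|| and let r ≥ 1. Then for every n, Ex_1(v,(k-1)r+1,n) ≤ Ex_r(v,k,n) ≤ r·Ex_1(v,k,n). -/
/-- `u` is `(k,r)`-sparse: for every `j`, the letters at positions
`j, j+r, ..., j+(k-1)r` (those within range) are pairwise distinct. -/
def ArithSparse (k r : ℕ) (u : List ℕ) : Prop :=
  ∀ j a b : ℕ, a < b → b < k → j + b * r < u.length →
    u.getD (j + a * r) 0 ≠ u.getD (j + b * r) 0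

/-- Two sequences are isomorphic if one is obtained from the other by a
bijective renaming of letters. -/
def Isomorphic (u v : List ℕ) : Prop := ∃ β : ℕ ≃ ℕ, v = u.map β

/-- `u` contains `v` if `u` has a subsequence isomorphic to `v`. -/
def Contains (u v : List ℕ) : Prop := ∃ w : List ℕ, w.Sublist u ∧ Isomorphic w v

/-- `Ex v k r n` is the maximum length of a `v`-free, `(k,r)`-sparse sequence
using at most `n` distinct letters. -/
noncomputable def Ex (v : List ℕ) (k r n : ℕ) : ℕ :=
  sSup {l : ℕ | ∃ u : List ℕ,
    u.length = l ∧ ¬ Contains u v ∧ ArithSparse k r u ∧ u.toFinset.card ≤ n}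


lemma sublist_aux (w u : List ℕ) (f : ℕ → ℕ)
    (hmono : ∀ i j, i < j → j < w.length → f i < f j)
    (hlt : ∀ i, i < w.length → f i < u.length)
    (h : ∀ i, i < w.length → w.getD i 0 = u.getD (f i) 0) : w.Sublist u := by
  rw [List.sublist_iff_exists_fin_orderEmbedding_get_eq]
  refine ⟨OrderEmbedding.ofStrictMono (fun i => ⟨f i, hlt i i.2⟩) ?_, ?_⟩
  · intro i j hij
    exact hmono i j hij j.2
  · intro i
    have := h i i.2
    rw [List.getD_eq_getElem _ _ i.2, List.getD_eq_getElem _ _ (hlt i i.2)] at this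
    simp only [List.get_eq_getElem]; exact this

lemma perm_aux (S T : Finset ℕ) (h : S.card ≤ T.card) :
    ∃ σ : Equiv.Perm ℕ, ∀ x ∈ S, σ x ∈ T := by
  obtain ⟨T', hT', hc⟩ := Finset.exists_subset_card_eq h
  have htr := Equiv.Perm.isMultiplyPretransitive ℕ S.card
  let x : Fin S.card ↪ ℕ := (S.equivFin.symm.toEmbedding).trans (Function.Embedding.subtype _)
  let y : Fin S.card ↪ ℕ :=
    ((T'.equivFinOfCardEq hc).symm.toEmbedding).trans (Function.Embedding.subtype _)
  obtain ⟨g, hg⟩ := htr.exists_smul_eq x y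
  refine ⟨g, fun a ha => ?_⟩
  have h1 := DFunLike.congr_fun hg (S.equivFin ⟨a, ha⟩)
  have h2 : g a = y (S.equivFin ⟨a, ha⟩) := by
    rw [← h1]; simp [x]
  rw [h2]
  apply hT'
  simp [y]

lemma bound_aux (v : List ℕ) (k n : ℕ) (hk : v.toFinset.card ≤ k) (u : List ℕ)
    (hc : ¬ Contains u v) (hs : ArithSparse k 1 u) (hn : u.toFinset.card ≤ n) :
    u.length ≤ k * (2 ^ n * v.length + 1) := by
  by_contra! hlen
  apply hc
  let B : ℕ → Finset ℕ := fun i => (Finset.range k).image (fun t => u.getD (k * i + t) 0)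
  have hpos : ∀ i ∈ Finset.range (2 ^ n * v.length + 1), ∀ t < k, k * i + t < u.length := by
    intro i hi t ht
    have hi' : i + 1 ≤ 2 ^ n * v.length + 1 := by simpa using hi
    have := Nat.mul_le_mul_left k hi'
    rw [Nat.mul_add] at this
    omega
  have hmaps : ∀ i ∈ Finset.range (2 ^ n * v.length + 1), B i ∈ u.toFinset.powerset := by
    intro i hi
    rw [Finset.mem_powerset]
    intro x hx
    simp only [B, Finset.mem_image, Finset.mem_range] at hx
    obtain ⟨t, ht, rfl⟩ := hx
    rw [List.getD_eq_getElem _ _ (hpos i hi t ht)]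
    simp
  have hcard : u.toFinset.powerset.card * v.length
      < (Finset.range (2 ^ n * v.length + 1)).card := by
    rw [Finset.card_powerset, Finset.card_range]
    have : 2 ^ u.toFinset.card ≤ 2 ^ n := Nat.pow_le_pow_right (by norm_num) hn
    have := Nat.mul_le_mul_right v.length this
    omega
  obtain ⟨T, -, hT⟩ := Finset.exists_lt_card_fiber_of_mul_lt_card_of_maps_to hmaps hcard
  obtain ⟨F, hF, hFc⟩ := Finset.exists_subset_card_eq hT.le
  have hFm : ∀ i ∈ F, i ∈ Finset.range (2 ^ n * v.length + 1) ∧ B i = T := by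
    intro i hi
    simpa using hF hi
  have hTk : v.toFinset.card ≤ T.card := by
    obtain ⟨i, hi⟩ : ((Finset.range (2 ^ n * v.length + 1)).filter (fun i => B i = T)).Nonempty := by
      rw [← Finset.card_pos]; omega
    rw [Finset.mem_filter] at hi
    have : (B i).card = k := by
      have hinj : Set.InjOn (fun t => u.getD (k * i + t) 0) (Finset.range k : Set ℕ) := by
        intro a ha b hb hab
        simp only [Finset.coe_range, Set.mem_Iio] at ha hb
        simp only at hab
        rcases lt_trichotomy a b with h | h | h
        · have := hs (k * i) a b h hb (by simpa using hpos i hi.1 b hb)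
          simp only [mul_one] at this
          exact absurd hab this
        · exact h
        · have := hs (k * i) b a h ha (by simpa using hpos i hi.1 a ha)
          simp only [mul_one] at this
          exact absurd hab.symm this
      simp only [B]
      rw [Finset.card_image_of_injOn hinj, Finset.card_range]
    rw [← hi.2, this]; exact hk
  obtain ⟨σ, hσ⟩ := perm_aux _ _ hTk
  refine ⟨v.map σ, ?_, σ.symm, by simp⟩
  let e := F.orderEmbOfFin hFc
  have hex : ∀ i : ℕ, ∃ t, ∀ h : i < v.length, t < k ∧ σ v[i] = u.getD (k * e ⟨i, h⟩ + t) 0 := by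
    intro i
    by_cases h : i < v.length
    · have h1 : σ v[i] ∈ T := hσ _ (by simp)
      have h2 := (hFm (e ⟨i, h⟩) (Finset.orderEmbOfFin_mem F hFc _)).2
      rw [← h2] at h1
      simp only [B, Finset.mem_image, Finset.mem_range] at h1
      obtain ⟨t, ht, h3⟩ := h1
      exact ⟨t, fun _ => ⟨ht, h3.symm⟩⟩
    · exact ⟨0, fun h' => absurd h' h⟩
  choose t ht using hex
  apply sublist_aux _ _ (fun i => if h : i < v.length then k * e ⟨i, h⟩ + t i else 0)
  · intro i j hij hj
    rw [List.length_map] at hj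
    have hi := hij.trans hj
    simp only [hi, hj, dif_pos]
    have h1 : e ⟨i, hi⟩ < e ⟨j, hj⟩ := by
      apply e.strictMono; exact hij
    have h2 := Nat.mul_le_mul_left k (Nat.succ_le_of_lt h1)
    rw [Nat.mul_succ] at h2
    have := (ht i hi).1
    omega
  · intro i hi
    rw [List.length_map] at hi
    simp only [hi, dif_pos]
    exact hpos _ (hFm _ (Finset.orderEmbOfFin_mem F hFc _)).1 _ (ht i hi).1
  · intro i hi
    have hi' := hi
    rw [List.length_map] at hi'
    simp only [hi', dif_pos]
    rw [List.getD_eq_getElem _ _ hi, ← (ht i hi').2]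
    simp

lemma upper_aux (v : List ℕ) (k r n : ℕ) (hk : v.toFinset.card ≤ k) (hr : 1 ≤ r) (u : List ℕ)
    (hc : ¬ Contains u v) (hs : ArithSparse k r u) (hn : u.toFinset.card ≤ n) :
    u.length ≤ r * Ex v k 1 n := by
  let m := (u.length + r - 1) / r
  have hm : u.length ≤ r * m := by
    have h1 := Nat.div_add_mod (u.length + r - 1) r
    have h2 := Nat.mod_lt (u.length + r - 1) (show r > 0 from hr)
    simp only [m]
    omega
  have hm' : ∀ i < m, i * r < u.length := by
    intro i hi
    have h1 : (i + 1) * r ≤ u.length + r - 1 := (Nat.le_div_iff_mul_le hr).1 hi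
    rw [Nat.add_mul] at h1
    omega
  let w := (List.range m).map (fun i => u.getD (i * r) 0)
  have hwl : w.length = m := by simp [w]
  have hw : ∀ i < m, w.getD i 0 = u.getD (i * r) 0 := by
    intro i hi
    rw [List.getD_eq_getElem _ _ (by omega)]
    simp [w]
  have hsub : w.Sublist u := by
    apply sublist_aux _ _ (fun i => i * r)
    · intro i j hij _
      exact Nat.mul_lt_mul_of_pos_right hij hr
    · intro i hi; exact hm' i (by omega)
    · intro i hi; exact hw i (by omega)
  refine hm.trans (Nat.mul_le_mul_left r ?_)
  apply le_csSup
  · refine ⟨k * (2 ^ n * v.length + 1), ?_⟩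
    rintro l ⟨u', rfl, h1, h2, h3⟩
    exact bound_aux v k n hk u' h1 h2 h3
  · refine ⟨w, hwl, ?_, ?_, ?_⟩
    · rintro ⟨x, hx, hi⟩
      exact hc ⟨x, hx.trans hsub, hi⟩
    · intro j a b hab hb hlt
      rw [hwl] at hlt
      simp only [mul_one] at hlt ⊢
      rw [hw _ hlt, hw _ (by omega), Nat.add_mul, Nat.add_mul]
      refine hs (j * r) a b hab hb ?_
      rw [← Nat.add_mul]
      exact hm' _ hlt
    · refine (Finset.card_le_card ?_).trans hn
      intro x hx
      rw [List.mem_toFinset] at hx ⊢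
      exact hsub.subset hx

theorem stmt_0 (v : List ℕ) (k r : ℕ) (hk : v.toFinset.card ≤ k) (hr : 1 ≤ r) (n : ℕ) :
    Ex v ((k - 1) * r + 1) 1 n ≤ Ex v k r n ∧ Ex v k r n ≤ r * Ex v k 1 n := by
  constructor
  · apply csSup_le_csSup'
    · refine ⟨r * Ex v k 1 n, ?_⟩
      rintro l ⟨u, rfl, h1, h2, h3⟩
      exact upper_aux v k r n hk hr u h1 h2 h3
    · rintro l ⟨u, rfl, h1, h2, h3⟩
      refine ⟨u, rfl, h1, ?_, h3⟩
      intro j a b hab hb hlt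
      have hbk : b * r ≤ (k - 1) * r := Nat.mul_le_mul_right r (by omega)
      have := h2 j (a * r) (b * r) (Nat.mul_lt_mul_of_pos_right hab hr) (by omega) (by simpa using hlt)
      simpa only [mul_one] using this
  · apply csSup_le'
    rintro l ⟨u, rfl, h1, h2, h3⟩
    exact upper_aux v k r n hk hr u h1 h2 h3
end

section
/- Let v be a sequence with k ≥ ||v|| and let r ≥ 1. Then there exists a constant c > 0 (depending only on r, v and k) such that for all n, Ex_r(v,n) ≤ c·Ex_r(v,k,n); moreover Ex_r(v,k,n) ≤ Ex_r(v,n) for all n. -/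
theorem aux_perm (A T : Finset ℕ) (h : A.card = T.card) :
    ∃ g : ℕ ≃ ℕ, ∀ x ∈ A, g x ∈ T := by
  classical
  let e := Finset.equivOfCardEq h
  let f : ((A : Set ℕ)) ↪ ℕ :=
    ⟨fun x => (e ⟨x.1, Finset.mem_coe.1 x.2⟩ : ℕ), fun x y hxy => by
      have h1 := e.injective (Subtype.ext hxy)
      exact Subtype.ext (Subtype.mk.inj h1)⟩
  have hA : ((A : Set ℕ)ᶜ).Infinite := A.finite_toSet.infinite_compl
  have hT : ((Set.range f)ᶜ).Infinite := (Set.finite_range f).infinite_compl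
  have i1 := hA.to_subtype
  have i2 := hT.to_subtype
  obtain ⟨d1⟩ := nonempty_denumerable (((A : Set ℕ)ᶜ : Set ℕ))
  obtain ⟨d2⟩ := nonempty_denumerable (((Set.range f)ᶜ : Set ℕ))
  obtain ⟨g, hg⟩ := Cardinal.extend_function f ⟨Denumerable.equiv₂ _ _⟩
  refine ⟨g, fun x hx => ?_⟩
  have := hg ⟨x, Finset.mem_coe.2 hx⟩
  simp only at this
  rw [this]
  exact (e ⟨x, hx⟩).2

theorem aux_embed (T : Finset ℕ) (L : List (List ℕ)) : ∀ w : List ℕ,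
    (∀ x ∈ w, x ∈ T) → w.length ≤ (L.filter (fun l => decide (T ⊆ l.toFinset))).length →
    w.Sublist L.flatten := by
  induction L with
  | nil => intro w _ h; simp at h; simp [h]
  | cons l L ih =>
    intro w hw h
    by_cases hl : T ⊆ l.toFinset
    · cases w with
      | nil => simp
      | cons a w =>
        simp only [List.filter_cons, hl, decide_true, if_true, List.length_cons] at h
        have h1 := ih w (fun x hx => hw x (by simp [hx])) (by omega)
        have ha : a ∈ l := by
          have := hl (hw a (by simp)); simpa using this
        have : [a].Sublist l := List.singleton_sublist.2 ha
        simpa using this.append h1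
    · simp only [List.filter_cons, hl, decide_false] at h
      rw [List.flatten_cons]
      exact (ih w hw (by simpa using h)).trans (List.sublist_append_right _ _)

theorem aux_pigeon (P : Finset (Finset ℕ)) (L : List (List ℕ))
    (h : ∀ l ∈ L, ∃ T ∈ P, T ⊆ l.toFinset) :
    L.length ≤ ∑ T ∈ P, (L.filter (fun l => decide (T ⊆ l.toFinset))).length := by
  induction L with
  | nil => simp
  | cons l L ih =>
    have h1 := ih (fun l hl => h l (by simp [hl]))
    obtain ⟨T, hT, hTl⟩ := h l (by simp)
    rw [List.length_cons]
    refine lt_of_le_of_lt h1 (Finset.sum_lt_sum (fun U _ => ?_) ⟨T, hT, ?_⟩)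
    · exact ((List.sublist_cons_self l L).filter _).length_le
    · simp [hTl]

theorem aux_sparse_drop {k r : ℕ} {u : List ℕ} (h : ArithSparse k r u) (a : ℕ) :
    ArithSparse k r (u.drop a) := by
  intro j x y hxy hy hl
  have := h (a + j) x y hxy hy (by simp at hl; omega)
  simpa [List.getD_eq_getElem?_getD, List.getElem?_drop, add_assoc] using this

theorem aux_sparse_take {k r : ℕ} {u : List ℕ} (h : ArithSparse k r u) (a : ℕ) :
    ArithSparse k r (u.take a) := by
  intro j x y hxy hy hl
  have hl' : j + y * r < a ∧ j + y * r < u.length := by simpa using hl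
  have := h j x y hxy hy hl'.2
  have h2 : x * r ≤ y * r := Nat.mul_le_mul_right _ hxy.le
  have h3 : j + x * r < a := by omega
  simpa [List.getD_eq_getElem?_getD, List.getElem?_take, hl'.1, h3] using this

theorem aux_blocks (s r : ℕ) (m : ℕ) (N : ℕ) : ∀ u : List ℕ, ArithSparse s r u →
    N * m ≤ u.length → ∃ L : List (List ℕ), L.length = N ∧ L.flatten.Sublist u ∧
      ∀ l ∈ L, l.length = m ∧ ArithSparse s r l ∧ l.toFinset ⊆ u.toFinset := by
  induction N with
  | zero => intro u _ _; exact ⟨[], by simp⟩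
  | succ N ih =>
    intro u hu hl
    rw [Nat.succ_mul] at hl
    obtain ⟨L, h1, h2, h3⟩ := ih (u.drop m) (aux_sparse_drop hu m) (by simp; omega)
    refine ⟨u.take m :: L, by simp [h1], ?_, ?_⟩
    · rw [List.flatten_cons]
      conv_rhs => rw [← List.take_append_drop m u]
      exact (List.Sublist.refl _).append h2
    · intro l hl'
      rcases List.mem_cons.1 hl' with rfl | hl'
      · refine ⟨by simp; omega, aux_sparse_take hu m, ?_⟩
        intro x hx
        simp only [List.mem_toFinset] at hx ⊢
        exact List.mem_of_mem_take hx
      · obtain ⟨a, b, c⟩ := h3 l hl'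
        refine ⟨a, b, c.trans ?_⟩
        intro x hx
        simp only [List.mem_toFinset] at hx ⊢
        exact List.mem_of_mem_drop hx

theorem aux_card {s r : ℕ} (hr : 1 ≤ r) {l : List ℕ} (h : ArithSparse s r l)
    (hl : l.length = s * r) : s ≤ l.toFinset.card := by
  have hlt : ∀ a < s, a * r < l.length := fun a ha => by
    rw [hl]; exact Nat.mul_lt_mul_of_pos_right ha hr
  have := Finset.card_le_card_of_injOn (s := Finset.range s) (t := l.toFinset)
    (fun a => l.getD (0 + a * r) 0) ?_ ?_
  · simpa using this
  · intro a ha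
    have ha' := hlt a (by simpa using ha)
    simp only [zero_add, List.getD_eq_getElem _ _ ha']
    simp
  · intro a ha b hb hab
    simp only [Finset.coe_range, Set.mem_Iio] at ha hb
    by_contra hne
    rcases lt_or_gt_of_ne hne with h1 | h1
    · exact h 0 a b h1 hb (by simpa using hlt b hb) hab
    · exact h 0 b a h1 ha (by simpa using hlt a ha) hab.symm

theorem aux_bound (v : List ℕ) (r : ℕ) (hr : 1 ≤ r) (n : ℕ) (u : List ℕ)
    (hc : ¬ Contains u v) (hs : ArithSparse v.toFinset.card r u) (hn : u.toFinset.card ≤ n) :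
    u.length ≤ (2 ^ n * v.length + 1) * (v.toFinset.card * r) := by
  by_contra hlt
  push Not at hlt
  obtain ⟨L, h1, h2, h3⟩ := aux_blocks _ r (v.toFinset.card * r) (2 ^ n * v.length + 1) u hs hlt.le
  have hP := aux_pigeon (u.toFinset.powersetCard v.toFinset.card) L (fun l hl => by
    obtain ⟨a, b, c⟩ := h3 l hl
    obtain ⟨T, hT, hTc⟩ := Finset.exists_subset_card_eq (aux_card hr b a)
    exact ⟨T, Finset.mem_powersetCard.2 ⟨hT.trans c, hTc⟩, hT⟩)
  have key : ∀ T ∈ u.toFinset.powersetCard v.toFinset.card,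
      (L.filter (fun l => decide (T ⊆ l.toFinset))).length ≤ v.length := by
    intro T hT
    by_contra hh
    push Not at hh
    obtain ⟨g, hg⟩ := aux_perm v.toFinset T (Finset.mem_powersetCard.1 hT).2.symm
    apply hc
    refine ⟨v.map g, (aux_embed T L _ ?_ (by simpa using hh.le)).trans h2, g.symm, by simp⟩
    intro x hx
    obtain ⟨y, hy, rfl⟩ := List.mem_map.1 hx
    exact hg y (by simpa using hy)
  have h4 := Finset.sum_le_card_nsmul _ _ _ key
  have h5 : (u.toFinset.powersetCard v.toFinset.card).card ≤ 2 ^ n := by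
    calc _ ≤ u.toFinset.powerset.card :=
          Finset.card_le_card (fun T hT => Finset.mem_powerset.2 (Finset.mem_powersetCard.1 hT).1)
      _ = 2 ^ u.toFinset.card := Finset.card_powerset _
      _ ≤ 2 ^ n := Nat.pow_le_pow_right (by norm_num) hn
  have h6 := Nat.mul_le_mul_right v.length h5
  rw [smul_eq_mul] at h4
  omega

theorem aux_greedy (D M : ℕ) (u : List ℕ)
    (h : ∀ p : List ℕ, p <:+: u → p.toFinset.card ≤ D → p.length ≤ M) :
    ∃ u' p q : List ℕ, u = p ++ q ∧ u'.Sublist u ∧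
      (∀ x ∈ p, x ∈ u'.take D) ∧ q.length ≤ (1 + M) * u'.length ∧
      ∀ i d, 0 < d → d ≤ D → i + d < u'.length → u'.getD i 0 ≠ u'.getD (i + d) 0 := by
  induction u with
  | nil => exact ⟨[], [], [], by simp⟩
  | cons a u ih =>
    obtain ⟨u', p, q, rfl, h2, h3, h4, h5⟩ := ih (fun p hp => h p (hp.trans (List.suffix_cons _ _).isInfix))
    by_cases ha : a ∈ u'.take D
    · refine ⟨u', a :: p, q, by simp, h2.trans (List.sublist_cons_self _ _), ?_, h4, h5⟩
      intro x hx
      rcases List.mem_cons.1 hx with rfl | hx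
      · exact ha
      · exact h3 x hx
    · have hp : p.length ≤ M := by
        refine h p ⟨[a], q, by simp⟩ ?_
        calc p.toFinset.card ≤ (u'.take D).toFinset.card := by
              apply Finset.card_le_card
              intro x hx
              simpa using h3 x (by simpa using hx)
          _ ≤ (u'.take D).length := List.toFinset_card_le _
          _ ≤ D := by simp
      refine ⟨a :: u', [], a :: (p ++ q), by simp, h2.cons_cons a, by simp, ?_, ?_⟩
      · simp only [List.length_cons, List.length_append, mul_add]; omega
      · intro i d hd hdD hl
        cases i with
        | zero =>
          obtain ⟨e, rfl⟩ : ∃ e, d = e + 1 := ⟨d - 1, by omega⟩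
          have he : e < u'.length := by simpa using hl
          simp only [zero_add, List.getD_cons_zero, List.getD_cons_succ,
            List.getD_eq_getElem _ _ he]
          intro hae
          apply ha
          rw [List.mem_take_iff_getElem]
          exact ⟨e, by omega, hae.symm⟩
        | succ i =>
          have := h5 i d hd hdD (by simp at hl; omega)
          rw [show i + 1 + d = (i + d) + 1 by omega]
          simpa using this

theorem aux_contains_mono {u u' v : List ℕ} (h : u'.Sublist u) (hc : Contains u' v) :
    Contains u v := by
  obtain ⟨w, hw, hi⟩ := hc
  exact ⟨w, hw.trans h, hi⟩

theorem aux_sparse_mono {k k' r : ℕ} {u : List ℕ} (hk : k ≤ k') (h : ArithSparse k' r u) :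
    ArithSparse k r u :=
  fun j a b hab hb hl => h j a b hab (hb.trans_le hk) hl

theorem stmt_1 (v : List ℕ) (k r : ℕ) (hk : v.toFinset.card ≤ k) (hr : 1 ≤ r) :
    (∃ c : ℕ, 0 < c ∧ ∀ n : ℕ, Ex v v.toFinset.card r n ≤ c * Ex v k r n) ∧
    ∀ n : ℕ, Ex v k r n ≤ Ex v v.toFinset.card r n := by
  have bdd : ∀ n k, v.toFinset.card ≤ k → BddAbove {l : ℕ | ∃ u : List ℕ,
      u.length = l ∧ ¬ Contains u v ∧ ArithSparse k r u ∧ u.toFinset.card ≤ n} := by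
    rintro n k hk
    refine ⟨(2 ^ n * v.length + 1) * (v.toFinset.card * r), ?_⟩
    · rintro l ⟨u, rfl, h1, h2, h3⟩
      exact aux_bound v r hr n u h1 (aux_sparse_mono hk h2) h3
  constructor
  · let M := (2 ^ (k * r) * v.length + 1) * (v.toFinset.card * r)
    refine ⟨1 + 2 * M, by omega, fun n => ?_⟩
    apply csSup_le'
    rintro l ⟨u, rfl, h1, h2, h3⟩
    obtain ⟨u', p, q, hu, hsub, hp, hq, hsp⟩ := aux_greedy (k * r) M u (by
      rintro p hpu hpc
      refine aux_bound v r hr _ p (fun hc => h1 (aux_contains_mono hpu.sublist hc)) ?_ hpc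
      obtain ⟨x, y, rfl⟩ := hpu
      have := aux_sparse_take (aux_sparse_drop h2 x.length) p.length
      simpa using this)
    have hu' : u'.length ≤ Ex v k r n := by
      apply le_csSup (bdd n k hk)
      refine ⟨u', rfl, fun hc => h1 (aux_contains_mono hsub hc), ?_, ?_⟩
      · intro j a b hab hb hl
        obtain ⟨d, rfl⟩ := Nat.exists_eq_add_of_lt hab
        have e : j + (a + d + 1) * r = j + a * r + (d + 1) * r := by ring
        rw [e] at hl ⊢
        exact hsp _ _ (by positivity) (Nat.mul_le_mul_right _ (by omega)) hl
      · refine (Finset.card_le_card ?_).trans h3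
        intro x hx
        simp only [List.mem_toFinset] at hx ⊢
        exact hsub.subset hx
    refine le_trans ?_ (Nat.mul_le_mul_left _ hu')
    have hpM : p.length ≤ M * u'.length := by
      rcases Nat.eq_zero_or_pos u'.length with h0 | h0
      · have : u' = [] := List.length_eq_zero_iff.1 h0
        subst this
        have : p = [] := List.eq_nil_iff_forall_not_mem.2 (fun x hx => by simpa using hp x hx)
        simp [this]
      · refine le_trans ?_ (Nat.le_mul_of_pos_right M h0)
        refine aux_bound v r hr _ p (fun hc => h1 (aux_contains_mono ?_ hc)) ?_ ?_
        · rw [hu]; exact List.sublist_append_left _ _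
        · have := aux_sparse_take h2 p.length
          rw [hu] at this
          simpa using this
        · calc p.toFinset.card ≤ (u'.take (k * r)).toFinset.card := by
                apply Finset.card_le_card
                intro x hx
                simpa using hp x (by simpa using hx)
            _ ≤ (u'.take (k * r)).length := List.toFinset_card_le _
            _ ≤ k * r := by simp
    rw [hu, List.length_append]
    nlinarith
  · intro n
    apply csSup_le'
    rintro l ⟨u, rfl, h1, h2, h3⟩
    exact le_csSup (bdd n _ le_rfl) ⟨u, rfl, h1, aux_sparse_mono hk h2, h3⟩
end

section
/- Let v be a sequence with k ≥ ||v|| and let r ≥ 1. Then Ex_r(v,k,n) = O(n^2), i.e. there exists a constant c > 0 such that Ex_r(v,k,n) ≤ c·n^2 for all n ≥ 1. -/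
/-- `u` contains a formation: `s` consecutive pieces each containing all letters of `S`. -/
def Form (S : Finset ℕ) (s : ℕ) (u : List ℕ) : Prop :=
  ∃ L : List (List ℕ), L.length = s ∧ (∀ x ∈ L, S ⊆ x.toFinset) ∧ L.flatten.Sublist u

theorem Form.mono {S : Finset ℕ} {s : ℕ} {u w : List ℕ} (h : Form S s u) (hs : u.Sublist w) :
    Form S s w := by
  obtain ⟨L, h1, h2, h3⟩ := h
  exact ⟨L, h1, h2, h3.trans hs⟩

theorem Form.snoc {S : Finset ℕ} {s : ℕ} {u w : List ℕ} (h : Form S s u) (hs : S ⊆ w.toFinset) :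
    Form S (s+1) (u ++ w) := by
  obtain ⟨L, h1, h2, h3⟩ := h
  refine ⟨L ++ [w], by simp [h1], ?_, ?_⟩
  · intro x hx
    rcases List.mem_append.1 hx with hx | hx
    · exact h2 x hx
    · rw [List.mem_singleton] at hx; subst hx; exact hs
  · simpa using h3

theorem Form.cons {S : Finset ℕ} {s : ℕ} {u w : List ℕ} (h : Form S s u) (hs : S ⊆ w.toFinset) :
    Form S (s+1) (w ++ u) := by
  obtain ⟨L, h1, h2, h3⟩ := h
  refine ⟨w :: L, by simp [h1], ?_, ?_⟩
  · intro x hx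
    rcases List.mem_cons.1 hx with hx | hx
    · subst hx; exact hs
    · exact h2 x hx
  · simpa using h3

theorem Form.one {S : Finset ℕ} {u : List ℕ} (hs : S ⊆ u.toFinset) : Form S 1 u :=
  ⟨[u], by simp, by simpa using hs, by simp⟩

theorem Form.subset {S : Finset ℕ} {s : ℕ} {u : List ℕ} (h : Form S (s+1) u) :
    S ⊆ u.toFinset := by
  obtain ⟨L, h1, h2, h3⟩ := h
  cases L with
  | nil => simp at h1
  | cons x L =>
    intro a ha
    have := h2 x (by simp) ha
    rw [List.mem_toFinset] at this ⊢
    exact h3.subset (by simp [this])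

/-- total number of (block, letter of `A`) incidences -/
def wt (A : Finset ℕ) (B : List (List ℕ)) : ℕ := (B.map fun b => (A ∩ b.toFinset).card).sum

theorem wt_append (A : Finset ℕ) (B C : List (List ℕ)) : wt A (B ++ C) = wt A B + wt A C := by
  simp [wt]

theorem wt_le_mul (A : Finset ℕ) (B : List (List ℕ)) (m : ℕ)
    (h : ∀ b ∈ B, (A ∩ b.toFinset).card ≤ m) : wt A B ≤ B.length * m := by
  have := List.sum_le_card_nsmul (B.map fun b => (A ∩ b.toFinset).card) m (by simpa using h)
  simpa [wt] using this

theorem wt_split (A A1 A2 : Finset ℕ) (B : List (List ℕ))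
    (h : ∀ x ∈ A, x ∈ B.flatten → x ∈ A1 ∨ x ∈ A2) : wt A B ≤ wt A1 B + wt A2 B := by
  induction B with
  | nil => simp [wt]
  | cons b B ih =>
    have h1 := ih (fun x hx hB => h x hx (by
      rw [List.flatten_cons, List.mem_append]; exact Or.inr hB))
    have h2 : (A ∩ b.toFinset).card ≤ (A1 ∩ b.toFinset).card + (A2 ∩ b.toFinset).card := by
      refine le_trans (Finset.card_le_card ?_) (Finset.card_union_le _ _)
      intro x hx
      simp only [Finset.mem_inter, List.mem_toFinset, Finset.mem_union] at hx ⊢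
      have := h x hx.1 (by rw [List.flatten_cons, List.mem_append]; exact Or.inl hx.2)
      tauto
    simp only [wt, List.map_cons, List.sum_cons] at h1 ⊢
    omega

theorem wt_bound (k : ℕ) (hk : 1 ≤ k) (p : ℕ) : ∀ (t : ℕ) (A : Finset ℕ) (B : List (List ℕ)),
    B.length ≤ 2 ^ p → (∀ S ⊆ A, S.card = k → ¬ Form S (t+1) B.flatten) →
    wt A B ≤ k * (2*p+1)^t * (A.card + 2^p) := by
  have base : ∀ (p : ℕ) (A : Finset ℕ) (B : List (List ℕ)),
      B.length ≤ 2 ^ p → (∀ S ⊆ A, S.card = k → ¬ Form S 1 B.flatten) →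
      wt A B ≤ k * (A.card + 2^p) := by
    intro p A B hB hF
    have := wt_le_mul A B k (by
      intro b hb
      by_contra hc
      push Not at hc
      obtain ⟨S, hS, hS'⟩ := Finset.exists_subset_card_eq hc.le
      refine hF S (hS.trans Finset.inter_subset_left) hS' ?_
      exact (Form.one (hS.trans Finset.inter_subset_right)).mono
        (List.sublist_flatten_of_mem hb))
    calc wt A B ≤ B.length * k := this
      _ ≤ (A.card + 2^p) * k := by gcongr; omega
      _ = _ := by ring
  induction p with
  | zero =>
    intro t A B hB _
    have := wt_le_mul A B A.card (fun b _ => Finset.card_le_card Finset.inter_subset_left)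
    simp only [pow_zero] at hB
    simp only [mul_zero, zero_add, one_pow, mul_one, pow_zero]
    nlinarith
  | succ p ih =>
    intro t A B hB hF
    cases t with
    | zero => simpa using base (p+1) A B hB (by simpa using hF)
    | succ t =>
      obtain ⟨B1, B2, rfl, hB1, hB2⟩ : ∃ B1 B2, B = B1 ++ B2 ∧ B1.length ≤ 2^p ∧
          B2.length ≤ 2^p := by
        refine ⟨B.take (2^p), B.drop (2^p), by simp, by simp, ?_⟩
        rw [List.length_drop]; rw [pow_succ] at hB; omega
      set A1 := A.filter (fun x => x ∉ B2.flatten) with hA1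
      set A0 := A.filter (fun x => x ∈ B2.flatten) with hA0
      set A2 := A0.filter (fun x => x ∉ B1.flatten) with hA2
      set A3 := A0.filter (fun x => x ∈ B1.flatten) with hA3
      have c1 : A0.card + A1.card = A.card := Finset.card_filter_add_card_filter_not _
      have c2 : A3.card + A2.card = A0.card := Finset.card_filter_add_card_filter_not _
      rw [List.flatten_append] at hF
      have e1 := ih (t+1) A1 B1 hB1 (fun S hS hc hf =>
        hF S (hS.trans (Finset.filter_subset _ _)) hc (hf.mono (List.sublist_append_left _ _)))
      have e2 := ih (t+1) A2 B2 hB2 (fun S hS hc hf =>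
        hF S (hS.trans ((Finset.filter_subset _ _).trans (Finset.filter_subset _ _))) hc
          (hf.mono (List.sublist_append_right _ _)))
      have hA3A : A3 ⊆ A := (Finset.filter_subset _ _).trans (Finset.filter_subset _ _)
      have m1 : ∀ x ∈ A3, x ∈ B1.flatten := fun x hx => (Finset.mem_filter.1 hx).2
      have m2 : ∀ x ∈ A3, x ∈ B2.flatten := fun x hx =>
        (Finset.mem_filter.1 (Finset.mem_filter.1 hx).1).2
      have e3 := ih t A3 B1 hB1 (fun S hS hc hf => hF S (hS.trans hA3A) hc
        (hf.snoc (fun x hx => List.mem_toFinset.2 (m2 x (hS hx)))))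
      have e4 := ih t A3 B2 hB2 (fun S hS hc hf => hF S (hS.trans hA3A) hc
        (hf.cons (fun x hx => List.mem_toFinset.2 (m1 x (hS hx)))))
      have s1 := wt_split A A1 A3 B1 (by
        intro x hx hxB
        simp only [hA1, hA3, hA0, Finset.mem_filter]; tauto)
      have s2 := wt_split A A2 A3 B2 (by
        intro x hx hxB
        simp only [hA2, hA3, hA0, Finset.mem_filter]; tauto)
      rw [wt_append]
      calc wt A B1 + wt A B2
          ≤ k * (2*p+1)^(t+1) * (A1.card + 2^p) + k * (2*p+1)^(t+1) * (A2.card + 2^p)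
            + (k * (2*p+1)^t * (A3.card + 2^p) + k * (2*p+1)^t * (A3.card + 2^p)) := by omega
        _ = k * (2*p+1)^t * ((2*p+1) * (A1.card + A2.card + 2^(p+1))
              + 2 * A3.card + 2^(p+1)) := by ring
        _ ≤ k * (2*p+1)^t * ((2*(p+1)+1) * (A.card + 2^(p+1))) := by
            gcongr
            rw [← c1, ← c2]
            nlinarith [Nat.zero_le (p * A3.card), Nat.zero_le (2^(p+1)), Nat.zero_le A1.card]
        _ ≤ k * (2*(p+1)+1)^t * ((2*(p+1)+1) * (A.card + 2^(p+1))) := by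
            gcongr; omega
        _ = _ := by ring

theorem cut (k s : ℕ) (m : ℕ) : ∀ u : List ℕ, u.toFinset.card ≤ m →
    1 ≤ k →
    (∀ S : Finset ℕ, S.card = k → ¬ Form S (s+2) u) →
    ∃ B : List (List ℕ), B.flatten = u ∧ B.length ≤ m + 1 ∧
      ∀ b ∈ B, b ≠ [] → ∀ S : Finset ℕ, S.card = k → ¬ Form S (s+1) b.dropLast := by
  classical
  induction m with
  | zero =>
    intro u hu _ _
    have : u = [] := by simpa using hu
    exact ⟨[], by simp [this], by simp, by simp⟩
  | succ m ih =>
    intro u hu hk hF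
    by_cases hex : ∃ i, ∃ S : Finset ℕ, S.card = k ∧ Form S (s+1) (u.take i)
    · obtain ⟨S, hS, hf⟩ := Nat.find_spec hex
      have hmin := fun j => @Nat.find_min _ _ hex j
      set i := Nat.find hex with hi
      have hnot : ¬ S ⊆ (u.drop i).toFinset := by
        intro hsub
        have := hf.snoc hsub
        rw [List.take_append_drop] at this
        exact hF S hS this
      obtain ⟨x, hxS, hx⟩ := Finset.not_subset.1 hnot
      have hxu : x ∈ u.toFinset := (hf.mono (List.take_sublist _ _)).subset hxS
      have hlt : (u.drop i).toFinset.card < u.toFinset.card := by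
        apply Finset.card_lt_card
        refine ⟨fun y hy => ?_, fun h => hx (h hxu)⟩
        rw [List.mem_toFinset] at hy ⊢
        exact List.mem_of_mem_drop hy
      obtain ⟨B, hB1, hB2, hB3⟩ := ih (u.drop i) (by omega) hk
        (fun S hS hf => hF S hS (hf.mono (List.drop_sublist _ _)))
      refine ⟨u.take i :: B, by simp [hB1], by simpa using hB2, ?_⟩
      intro b hb hne S hS hf
      rcases List.mem_cons.1 hb with rfl | hb
      · have hi0 : 0 < i := by
          rcases Nat.eq_zero_or_pos i with h | h
          · rw [h] at hne; simp at hne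
          · exact h
        refine hmin (i-1) (by omega) ⟨S, hS, hf.mono ?_⟩
        rw [List.dropLast_eq_take, List.take_take]
        apply List.take_sublist_take_left
        rw [List.length_take]; omega
      · exact hB3 b hb hne S hS hf
    · push Not at hex
      refine ⟨[u], by simp, by simp, ?_⟩
      intro b hb _ S hS hf
      rw [List.mem_singleton] at hb
      subst hb
      have := hex b.length S hS
      rw [List.take_length] at this
      exact this (hf.mono (List.dropLast_sublist _))

/-- every factor of length at least `K` has at least `k` letters -/
def Sp (k K : ℕ) (u : List ℕ) : Prop := ∀ w, w <:+: u → K ≤ w.length → k ≤ w.toFinset.card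

theorem len_flatten_le (A : Finset ℕ) (G : ℕ) (B : List (List ℕ))
    (h : ∀ b ∈ B, b.length ≤ G * b.toFinset.card) (hA : ∀ b ∈ B, b.toFinset ⊆ A) :
    B.flatten.length ≤ G * wt A B := by
  induction B with
  | nil => simp
  | cons b B ih =>
    have h1 := ih (fun b hb => h b (by simp [hb])) (fun b hb => hA b (by simp [hb]))
    have h2 := h b (by simp)
    have h3 := Finset.inter_eq_right.2 (hA b (by simp))
    simp only [wt, List.map_cons, List.sum_cons, List.flatten_cons, List.length_append, h3] at h1 ⊢
    rw [Nat.mul_add]; omega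

theorem len_bound (k K : ℕ) (hk : 1 ≤ k) (t : ℕ) : ∃ C e : ℕ, ∀ (q : ℕ) (u : List ℕ),
    Sp k K u → (∀ S : Finset ℕ, S.card = k → ¬ Form S (t+1) u) →
    Nat.log 2 (2 * u.toFinset.card) + 1 ≤ q →
    u.length ≤ C * (2*q+1)^e * u.toFinset.card := by
  induction t with
  | zero =>
    refine ⟨K, 0, ?_⟩
    intro q u hsp hF _
    have hlt : u.length < K := by
      by_contra hc
      push Not at hc
      obtain ⟨S, hS, hS'⟩ := Finset.exists_subset_card_eq (hsp u List.infix_rfl hc)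
      exact hF S hS' (Form.one hS)
    rcases List.eq_nil_or_concat u with rfl | ⟨l, a, rfl⟩
    · simp
    · have : 0 < (l.concat a).toFinset.card := Finset.card_pos.2 ⟨a, by simp⟩
      simp only [pow_zero, mul_one]
      nlinarith
  | succ t ih =>
    obtain ⟨C, e, ih⟩ := ih
    refine ⟨(C+1) * k * 5, e + (t+1), ?_⟩
    intro q u hsp hF hq
    rcases Nat.eq_zero_or_pos u.toFinset.card with h0 | hpos
    · have : u = [] := by simpa using h0
      simp [this]
    obtain ⟨B, hB1, hB2, hB3⟩ := cut k t u.toFinset.card u le_rfl hk hF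
    have hsub : ∀ b ∈ B, b.toFinset ⊆ u.toFinset := by
      intro b hb x hx
      rw [List.mem_toFinset] at hx ⊢
      rw [← hB1]
      exact List.mem_flatten.2 ⟨b, hb, hx⟩
    have hinf : ∀ b ∈ B, b <:+: u := by
      intro b hb
      rw [← hB1]
      obtain ⟨s1, s2, hs⟩ := List.append_of_mem hb
      exact ⟨s1.flatten, s2.flatten, by rw [hs]; simp⟩
    have hlen := len_flatten_le u.toFinset ((C+1) * (2*q+1)^e) B (by
      intro b hb
      by_cases hne : b = []
      · simp [hne]
      have hd : b.dropLast.toFinset ⊆ b.toFinset := by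
        intro x hx
        rw [List.mem_toFinset] at hx ⊢
        exact List.mem_of_mem_dropLast hx
      have hdi : b.dropLast <:+: b := (List.dropLast_prefix b).isInfix
      have hlog : Nat.log 2 (2 * b.dropLast.toFinset.card) ≤ Nat.log 2 (2 * u.toFinset.card) := by
        apply Nat.log_mono_right
        have := Finset.card_le_card (hd.trans (hsub b hb))
        omega
      have h1 := ih q b.dropLast (fun w hw => hsp w (hw.trans (hdi.trans (hinf b hb))))
        (hB3 b hb hne) (by omega)
      have h2 := Finset.card_le_card hd
      have h3 : 0 < b.toFinset.card := by
        rw [Finset.card_pos]; exact (List.toFinset_nonempty_iff b).2 hne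
      have h4 : 1 ≤ (2*q+1)^e := Nat.one_le_pow _ _ (by omega)
      rw [List.length_dropLast] at h1
      calc b.length ≤ C * (2*q+1)^e * b.dropLast.toFinset.card + 1 * 1 * 1 := by omega
        _ ≤ C * (2*q+1)^e * b.toFinset.card + 1 * (2*q+1)^e * b.toFinset.card := by
          gcongr
          omega
        _ = _ := by ring) hsub
    rw [hB1] at hlen
    set n := u.toFinset.card with hn
    set p := Nat.log 2 (2*n) + 1 with hp
    have hp1 : 2 * n < 2 ^ p := Nat.lt_pow_succ_log_self (by norm_num) _
    have hp2 : 2 ^ p ≤ 4 * n := by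
      have := Nat.pow_log_le_self 2 (x := 2*n) (by omega)
      rw [hp, pow_succ]; omega
    have hw := wt_bound k hk p (t+1) u.toFinset B (by omega) (fun S _ hc => by
      rw [hB1]; exact hF S hc)
    calc u.length ≤ _ := hlen
      _ ≤ (C+1) * (2*q+1)^e * (k * (2*p+1)^(t+1) * (n + 2^p)) := by gcongr
      _ ≤ (C+1) * (2*q+1)^e * (k * (2*q+1)^(t+1) * (n + 4 * n)) := by gcongr
      _ = _ := by ring

theorem sublist_flatten_of_forall (S : Finset ℕ) : ∀ (w : List ℕ) (L : List (List ℕ)),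
    L.length = w.length → (∀ x ∈ L, S ⊆ x.toFinset) → (∀ a ∈ w, a ∈ S) →
    w.Sublist L.flatten := by
  intro w
  induction w with
  | nil => intros; simp
  | cons a w ih =>
    intro L hl hL hw
    cases L with
    | nil => simp at hl
    | cons x L =>
      have h1 := ih L (by simpa using hl) (fun y hy => hL y (by simp [hy]))
        (fun y hy => hw y (by simp [hy]))
      have h2 : a ∈ x := List.mem_toFinset.1 (hL x (by simp) (hw a (by simp)))
      rw [List.flatten_cons]
      exact (List.singleton_sublist.2 h2).append h1

theorem contains_of_form {v u : List ℕ} {S : Finset ℕ} (hS : v.toFinset.card ≤ S.card)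
    (h : Form S v.length u) : Contains u v := by
  obtain ⟨L, h1, h2, h3⟩ := h
  obtain ⟨f⟩ : Nonempty ((v.toFinset : Set ℕ) ↪ (S : Set ℕ)) := by
    apply Function.Embedding.nonempty_of_card_le
    rw [← Nat.card_eq_fintype_card, ← Nat.card_eq_fintype_card, Nat.card_coe_set_eq,
      Nat.card_coe_set_eq, Set.ncard_coe_finset, Set.ncard_coe_finset]
    exact hS
  obtain ⟨β, hβ⟩ := Cardinal.extend_function_of_lt (s := (v.toFinset : Set ℕ))
    (f.trans (Function.Embedding.subtype _)) (by
      rw [Cardinal.mk_nat]; exact Cardinal.lt_aleph0_of_finite _) ⟨Equiv.refl ℕ⟩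
  refine ⟨v.map β, ?_, β.symm, by simp⟩
  refine List.Sublist.trans (sublist_flatten_of_forall S _ L (by simpa using h1) h2 ?_) h3
  intro a ha
  obtain ⟨x, hx, rfl⟩ := List.mem_map.1 ha
  have := hβ ⟨x, by simpa using hx⟩
  simp only at this
  rw [this]
  exact (f ⟨x, by simpa using hx⟩).2

theorem sp_of_sparse {k r : ℕ} {u : List ℕ} (hr : 1 ≤ r) (h : ArithSparse k r u) :
    Sp k (k * r) u := by
  rintro w ⟨x, y, rfl⟩ hw
  have hlt : ∀ a < k, a * r < w.length := fun a ha =>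
    lt_of_lt_of_le (Nat.mul_lt_mul_of_pos_right ha hr) hw
  have hinj : Set.InjOn (fun a => (x ++ w ++ y).getD (x.length + a * r) 0) (Finset.range k) := by
    intro a ha b hb hab
    simp only [Finset.coe_range, Set.mem_Iio] at ha hb
    rcases lt_trichotomy a b with hl | hl | hl
    · exact absurd hab (h x.length a b hl hb (by have := hlt b hb; simp; omega))
    · exact hl
    · exact absurd hab.symm (h x.length b a hl ha (by have := hlt a ha; simp; omega))
  have := Finset.card_le_card_of_injOn (s := Finset.range k) (t := w.toFinset) _ (by
    intro a ha
    simp only [Finset.coe_range, Set.mem_Iio] at ha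
    have h1 := hlt a ha
    have : (x ++ w ++ y).getD (x.length + a * r) 0 = w[a * r] := by
      rw [List.getD_eq_getElem _ _ (by simp; omega)]
      simp [h1]
    simp only [this]
    simp) hinj
  simpa using this

theorem poly_le_exp (e : ℕ) : ∃ c : ℕ, ∀ q : ℕ, (2*q+1)^e ≤ c * 2^q := by
  have ht := tendsto_pow_const_div_const_pow_of_one_lt e (r := (2:ℝ)) (by norm_num)
  obtain ⟨M, hM⟩ := ht.bddAbove_range
  obtain ⟨c, hc⟩ := exists_nat_ge M
  refine ⟨3^e * c + 1, ?_⟩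
  intro q
  rcases Nat.eq_zero_or_pos q with rfl | hq
  · simp
  have h1 : (q:ℝ)^e / 2^q ≤ c := (hM ⟨q, rfl⟩).trans hc
  rw [div_le_iff₀ (by positivity)] at h1
  have h2 : q^e ≤ c * 2^q := by exact_mod_cast h1
  calc (2*q+1)^e ≤ (3*q)^e := by gcongr; omega
    _ = 3^e * q^e := mul_pow _ _ _
    _ ≤ 3^e * (c * 2^q) := by gcongr
    _ ≤ _ := by nlinarith [Nat.zero_le (2^q)]

theorem stmt_3 (v : List ℕ) (k r : ℕ) (hk : v.toFinset.card ≤ k) (hr : 1 ≤ r) :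
    ∃ c : ℕ, 0 < c ∧ ∀ n : ℕ, 1 ≤ n → Ex v k r n ≤ c * n ^ 2 := by
  have key : ∃ c : ℕ, ∀ n : ℕ, 1 ≤ n → ∀ u : List ℕ, ¬ Contains u v → ArithSparse k r u →
      u.toFinset.card ≤ n → u.length ≤ c * n^2 := by
    rcases List.eq_nil_or_concat v with rfl | ⟨l, a, hv⟩
    · exact ⟨0, fun n _ u hu => absurd ⟨[], by simp, Equiv.refl ℕ, by simp⟩ hu⟩
    have hpos : 0 < v.toFinset.card := Finset.card_pos.2 ⟨a, by simp [hv]⟩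
    have hl : v.length = l.length + 1 := by simp [hv]
    obtain ⟨C, e, hC⟩ := len_bound k (k * r) (by omega) l.length
    obtain ⟨c, hc⟩ := poly_le_exp e
    refine ⟨C * (c * 4), ?_⟩
    intro n hn u hu hsp hcard
    have h1 := hC (Nat.log 2 (2*n) + 1) u (sp_of_sparse hr hsp) (by
      intro S hS hf
      rw [← hl] at hf
      exact hu (contains_of_form (by omega) hf)) (by
      have : Nat.log 2 (2 * u.toFinset.card) ≤ Nat.log 2 (2*n) :=
        Nat.log_mono_right (by omega)
      omega)
    have h2 := hc (Nat.log 2 (2*n) + 1)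
    have h3 : 2 ^ (Nat.log 2 (2*n) + 1) ≤ 4 * n := by
      have := Nat.pow_log_le_self 2 (x := 2*n) (by omega)
      rw [pow_succ]; omega
    calc u.length ≤ _ := h1
      _ ≤ C * (c * 2 ^ (Nat.log 2 (2*n) + 1)) * n := by gcongr
      _ ≤ C * (c * (4 * n)) * n := by gcongr
      _ = _ := by ring
  obtain ⟨c, hc⟩ := key
  refine ⟨c + 1, by omega, ?_⟩
  intro n hn
  have hle : ∀ l ∈ {l : ℕ | ∃ u : List ℕ,
      u.length = l ∧ ¬ Contains u v ∧ ArithSparse k r u ∧ u.toFinset.card ≤ n},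
      l ≤ (c+1) * n^2 := by
    rintro l ⟨u, rfl, h1, h2, h3⟩
    exact (hc n hn u h1 h2 h3).trans (by gcongr; omega)
  unfold Ex
  rcases Set.eq_empty_or_nonempty {l : ℕ | ∃ u : List ℕ,
      u.length = l ∧ ¬ Contains u v ∧ ArithSparse k r u ∧ u.toFinset.card ≤ n} with h | h
  · rw [h]; simp
  · exact csSup_le h hle
end

section
/- Let v be a sequence that is 2-sparse with ||v|| ≥ 2, let k ≥ ||v|| and r ≥ 1. Then for every n, Ex_r(v,k,n) = r·Ex_1(v,k,n). -/
theorem aux_chain {v : List ℕ} (h : ArithSparse 2 1 v) : v.IsChain (· ≠ ·) := by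
  rw [List.isChain_iff_getElem]
  intro i hi
  have := h i 0 1 (by norm_num) (by norm_num) (by omega)
  simpa [List.getD_eq_getElem?_getD, hi, Nat.lt_of_succ_lt hi] using this

theorem aux_chain_map {w : List ℕ} (β : ℕ ≃ ℕ) (h : (w.map β).IsChain (· ≠ ·)) :
    w.IsChain (· ≠ ·) := by
  rw [List.isChain_map] at h
  exact h.imp (fun a b hab e => hab (by rw [e]))

theorem aux_sub (r : ℕ) (u : List ℕ) : ∀ w : List ℕ, w.IsChain (· ≠ ·) →
    w.Sublist (u.flatMap (fun a => List.replicate r a)) → w.Sublist u := by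
  induction u with
  | nil => intro w _ h; simpa using h
  | cons a u ih =>
    intro w hc h
    rw [List.flatMap_cons, List.sublist_append_iff] at h
    obtain ⟨w1, w2, rfl, h1, h2⟩ := h
    rw [List.sublist_replicate_iff] at h1
    obtain ⟨m, _, rfl⟩ := h1
    have h2' := ih w2 hc.right_of_append h2
    have hm := hc.left_of_append
    match m, hm with
    | 0, _ => simpa using h2'.cons a
    | 1, _ => simpa using h2'.cons_cons a
    | m + 2, hm => simp [List.replicate_succ] at hm

theorem aux_len (r : ℕ) (u : List ℕ) :
    (u.flatMap (fun a => List.replicate r a)).length = r * u.length := by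
  induction u with
  | nil => simp
  | cons a u ih => rw [List.flatMap_cons, List.length_append, ih]; simp; ring

theorem aux_get (r : ℕ) (hr : 1 ≤ r) (u : List ℕ) : ∀ j,
    (u.flatMap (fun a => List.replicate r a)).getD j 0 = u.getD (j / r) 0 := by
  induction u with
  | nil => intro j; simp
  | cons a u ih =>
    intro j
    rw [List.flatMap_cons]
    by_cases hj : j < r
    · rw [List.getD_append _ _ _ _ (by simpa using hj), Nat.div_eq_of_lt hj]
      simp [List.getD_eq_getElem?_getD, hj]
    · rw [List.getD_append_right _ _ _ _ (by simpa using hj), ih]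
      have : j / r = (j - r) / r + 1 := by
        rw [Nat.div_eq_sub_div hr (by omega)]
      rw [this]; simp

theorem aux_free {u u' v : List ℕ} (h : ∀ w : List ℕ, w.Sublist u' → (∃ β : ℕ ≃ ℕ, v = w.map β) →
    w.Sublist u) (hf : ¬ Contains u v) : ¬ Contains u' v := by
  rintro ⟨w, hw, hi⟩
  exact hf ⟨w, h w hw hi, hi⟩

theorem aux_up {v : List ℕ} {k r n : ℕ} (h2 : ArithSparse 2 1 v) (hr : 1 ≤ r) {u : List ℕ}
    (hf : ¬ Contains u v) (hs : ArithSparse k 1 u) (hc : u.toFinset.card ≤ n) :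
    ∃ u' : List ℕ, u'.length = r * u.length ∧ ¬ Contains u' v ∧ ArithSparse k r u' ∧
      u'.toFinset.card ≤ n := by
  refine ⟨u.flatMap (fun a => List.replicate r a), aux_len r u, ?_, ?_, ?_⟩
  · refine aux_free (fun w hw hi => ?_) hf
    obtain ⟨β, rfl⟩ := hi
    exact aux_sub r u w (aux_chain_map β (aux_chain h2)) hw
  · intro j a b hab hb hl
    rw [aux_len] at hl
    rw [aux_get r hr, aux_get r hr, Nat.add_mul_div_right _ _ hr, Nat.add_mul_div_right _ _ hr]
    have : j / r + b < u.length := by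
      rw [← Nat.add_mul_div_right _ _ hr]
      exact Nat.div_lt_of_lt_mul hl
    simpa using hs (j / r) a b hab hb (by simpa using this)
  · refine le_trans (Finset.card_le_card ?_) hc
    intro x hx
    simp only [List.mem_toFinset, List.mem_flatMap, List.mem_replicate] at hx ⊢
    obtain ⟨a, ha, _, rfl⟩ := hx
    exact ha

theorem aux_down {v : List ℕ} {k r n : ℕ} (hr : 1 ≤ r) {u : List ℕ}
    (hf : ¬ Contains u v) (hs : ArithSparse k r u) (hc : u.toFinset.card ≤ n) :
    ∃ u' : List ℕ, u.length ≤ r * u'.length ∧ ¬ Contains u' v ∧ ArithSparse k 1 u' ∧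
      u'.toFinset.card ≤ n := by
  obtain ⟨c, hc1, hc2⟩ : ∃ c, u.length ≤ r * c ∧ ∀ q, q < c → q * r < u.length := by
    refine ⟨(u.length + r - 1) / r, ?_, ?_⟩
    · have := Nat.lt_mul_div_succ (u.length + r - 1) hr
      rw [Nat.mul_add] at this
      omega
    · intro q hq
      have := (Nat.le_div_iff_mul_le hr).1 hq
      rw [Nat.succ_mul] at this
      omega
  have hsub : ((List.range c).map (fun q => u.getD (q * r) 0)).Sublist u := by
    rw [List.sublist_iff_exists_fin_orderEmbedding_get_eq]
    refine ⟨OrderEmbedding.ofStrictMono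
      (fun q => ⟨q.1 * r, hc2 _ (by simpa using q.2)⟩) ?_, ?_⟩
    · intro a b hab
      exact Nat.mul_lt_mul_of_pos_right (show a.1 < b.1 from hab) hr
    · intro q
      have := hc2 q.1 (by simpa using q.2)
      simp [List.getD_eq_getElem?_getD, this]
      rfl
  refine ⟨_, by simpa using hc1, aux_free (fun w hw _ => hw.trans hsub) hf, ?_, ?_⟩
  · intro j a b hab hb hl
    have hl' : j + b < c := by simpa using hl
    have h := hs (j * r) a b hab hb (by have := hc2 _ hl'; rwa [Nat.add_mul] at this)
    have ha' : j + a < c := by omega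
    simpa [List.getD_eq_getElem?_getD, hl', ha', Nat.add_mul] using h
  · refine le_trans (Finset.card_le_card ?_) hc
    intro x hx
    exact List.mem_toFinset.2 (hsub.subset (List.mem_toFinset.1 hx))

theorem stmt_4 (v : List ℕ) (k r : ℕ) (h2 : ArithSparse 2 1 v) (hv : 2 ≤ v.toFinset.card)
    (hk : v.toFinset.card ≤ k) (hr : 1 ≤ r) (n : ℕ) :
    Ex v k r n = r * Ex v k 1 n := by
  have hne : ∀ r', {l : ℕ | ∃ u : List ℕ,
      u.length = l ∧ ¬ Contains u v ∧ ArithSparse k r' u ∧ u.toFinset.card ≤ n}.Nonempty := by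
    intro r'
    refine ⟨0, [], rfl, ?_, ?_, by simp⟩
    · rintro ⟨w, hw, β, rfl⟩
      simp [List.sublist_nil.1 hw] at hv
    · intro j a b _ _ h
      simp at h
  unfold Ex
  by_cases hb : BddAbove {l : ℕ | ∃ u : List ℕ,
      u.length = l ∧ ¬ Contains u v ∧ ArithSparse k 1 u ∧ u.toFinset.card ≤ n}
  · have hub : ∀ l ∈ {l : ℕ | ∃ u : List ℕ,
        u.length = l ∧ ¬ Contains u v ∧ ArithSparse k r u ∧ u.toFinset.card ≤ n},
        l ≤ r * sSup {l : ℕ | ∃ u : List ℕ,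
          u.length = l ∧ ¬ Contains u v ∧ ArithSparse k 1 u ∧ u.toFinset.card ≤ n} := by
      rintro l ⟨u, rfl, hf, hs, hc⟩
      obtain ⟨u', hl, hf', hs', hc'⟩ := aux_down hr hf hs hc
      exact hl.trans (Nat.mul_le_mul_left r (le_csSup hb ⟨u', rfl, hf', hs', hc'⟩))
    apply le_antisymm
    · exact csSup_le (hne r) hub
    · obtain ⟨u, hl, hf, hs, hc⟩ := Nat.sSup_mem (hne 1) hb
      rw [← hl]
      exact le_csSup ⟨_, hub⟩ (aux_up h2 hr hf hs hc)
  · have hb' : ¬ BddAbove {l : ℕ | ∃ u : List ℕ,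
        u.length = l ∧ ¬ Contains u v ∧ ArithSparse k r u ∧ u.toFinset.card ≤ n} := by
      rintro ⟨B, hB⟩
      apply hb
      refine ⟨B, ?_⟩
      rintro l ⟨u, rfl, hf, hs, hc⟩
      exact (Nat.le_mul_of_pos_left _ hr).trans (hB (aux_up h2 hr hf hs hc))
    rw [Nat.sSup_of_not_bddAbove hb, Nat.sSup_of_not_bddAbove hb', mul_zero]
end

section
/- Let a ≠ b be two letters, k ≥ 2 and r ≥ 1. Then Ex_r(abab,k,n) = r·n if 1 ≤ n ≤ k-1, and Ex_r(abab,k,n) = r·(2n-k+1) if n ≥ k. -/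
theorem core_bound (f : ℕ → ℕ) (L k : ℕ) (hk : 2 ≤ k) (S : Finset ℕ)
    (hS : ∀ i < L, f i ∈ S)
    (hsp : ∀ i j, i < j → j < i + k → j < L → f i ≠ f j)
    (hfree : ∀ p q s t, p < q → q < s → s < t → t < L → f p = f s → f q = f t → f p = f q) :
    L ≤ S.card + (S.card + 1 - k) := by
  classical
  set B := (Finset.range L).filter (fun q => ∃ p < q, f p = f q) with hB
  set A := (Finset.range L).filter (fun i => ∀ j < L, i < j → f i ≠ f j) with hA
  have h1 : (Finset.range L \ B).card ≤ S.card := by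
    apply Finset.card_le_card_of_injOn f
    · intro i hi
      simp at hi
      exact hS i hi.1
    · intro i hi j hj hij
      simp [hB] at hi hj
      rcases lt_trichotomy i j with h | h | h
      · exact absurd hij (hj.2 hj.1 i h)
      · exact h
      · exact absurd hij.symm (hi.2 hi.1 j h)
  have h2 : A.card ≤ S.card := by
    apply Finset.card_le_card_of_injOn f
    · intro i hi
      simp [hA] at hi
      exact hS i hi.1
    · intro i hi j hj hij
      simp [hA] at hi hj
      rcases lt_trichotomy i j with h | h | h
      · exact absurd hij (hi.2 j hj.1 h)
      · exact h
      · exact absurd hij.symm (hj.2 i hi.1 h)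
  have hBL : B ⊆ Finset.range L := Finset.filter_subset _ _
  have h3 : (Finset.range L \ B).card = L - B.card := by
    rw [Finset.card_sdiff_of_subset hBL, Finset.card_range]
  rcases B.eq_empty_or_nonempty with h0 | h0
  · rw [h0, Finset.card_empty] at h3
    rw [h0] at h1
    omega
  have key : ∀ q ∈ B, k ≤ q ∧ ∀ i, i < q → q < i + k → i ∈ A := by
    intro q hq
    simp only [hB, Finset.mem_filter, Finset.mem_range] at hq
    obtain ⟨hqL, p, hpq, hfp⟩ := hq
    have hpk : p + k ≤ q := by
      by_contra h
      exact hsp p q hpq (by omega) hqL hfp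
    refine ⟨by omega, fun i hi hik => ?_⟩
    simp only [hA, Finset.mem_filter, Finset.mem_range]
    refine ⟨by omega, fun j hj hij he => ?_⟩
    by_cases hjk : j < i + k
    · exact hsp i j hij hjk hj he
    · have := hfree p i q j (by omega) hi (by omega) hj hfp he
      exact hsp i q hi hik hqL (this ▸ hfp)
  set b := B.min' h0
  have hbB : b ∈ B := B.min'_mem h0
  have hbk := (key b hbB).1
  have hbL : b < L := by simpa using hBL hbB
  have hLA : L - 1 ∈ A := by
    simp only [hA, Finset.mem_filter, Finset.mem_range]
    exact ⟨by omega, fun j hj hij => by omega⟩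
  have hsub : B ∪ (Finset.Ico (b + 2 - k) b ∪ {L}) ⊆ A.image (· + 1) := by
    intro x hx
    simp only [Finset.mem_union, Finset.mem_Ico, Finset.mem_singleton] at hx
    rw [Finset.mem_image]
    refine ⟨x - 1, ?_, ?_⟩
    · rcases hx with hx | hx | hx
      · have := (key x hx).1
        exact (key x hx).2 _ (by omega) (by omega)
      · exact (key b hbB).2 _ (by omega) (by omega)
      · rw [hx]; exact hLA
    · rcases hx with hx | hx | hx
      · have := (key x hx).1
        show x - 1 + 1 = x
        omega
      · show x - 1 + 1 = x
        omega
      · show x - 1 + 1 = x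
        omega
  have hc := (Finset.card_le_card hsub).trans Finset.card_image_le
  rw [Finset.card_union_of_disjoint, Finset.card_union_of_disjoint, Nat.card_Ico,
    Finset.card_singleton] at hc
  · have : B.card ≤ L := by simpa using Finset.card_le_card hBL
    omega
  · simp; omega
  · rw [Finset.disjoint_left]
    intro x hx hx'
    have h4 : b ≤ x := B.min'_le x hx
    have h5 : x < L := by simpa using hBL hx
    simp only [Finset.mem_union, Finset.mem_Ico, Finset.mem_singleton] at hx'
    omega

theorem exists_renaming (a b x y : ℕ) (hab : a ≠ b) (hxy : x ≠ y) :
    ∃ β : ℕ ≃ ℕ, β x = a ∧ β y = b := by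
  refine ⟨(Equiv.swap x a).trans (Equiv.swap (Equiv.swap x a y) b), ?_, ?_⟩
  · have h : a ≠ Equiv.swap x a y := by
      intro h
      have := congrArg (Equiv.swap x a) h
      simp at this
      exact hxy this
    simp only [Equiv.trans_apply, Equiv.swap_apply_left]
    exact Equiv.swap_apply_of_ne_of_ne h hab
  · simp

theorem upper_bound (a b : ℕ) (hab : a ≠ b) (k r : ℕ) (hk : 2 ≤ k) (hr : 1 ≤ r) (n : ℕ)
    (u : List ℕ) (hu : ¬ Contains u [a, b, a, b]) (hs : ArithSparse k r u)
    (hc : u.toFinset.card ≤ n) : u.length ≤ r * (n + (n + 1 - k)) := by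
  by_contra hlt
  push Not at hlt
  set M := n + (n + 1 - k) with hM
  have hin : ∀ i < M + 1, i * r < u.length := by
    intro i hi
    have : i * r ≤ M * r := Nat.mul_le_mul_right r (by omega)
    rw [mul_comm] at hlt
    omega
  have := core_bound (fun i => u.getD (i * r) 0) (M + 1) k hk u.toFinset ?_ ?_ ?_
  · omega
  · intro i hi
    have := hin i hi
    simp only [List.getD_eq_getElem _ _ this, List.mem_toFinset]
    exact List.getElem_mem _
  · intro i j hij hjk hj
    have h := hs (i * r) 0 (j - i) (by omega) (by omega)
    have e : i * r + (j - i) * r = j * r := by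
      rw [← add_mul]; congr 1; omega
    rw [e] at h
    simpa using h (hin j hj)
  · intro p q s t hpq hqs hst ht h1 h2
    by_contra hne
    apply hu
    have hp := hin p (by omega)
    have hq := hin q (by omega)
    have hs := hin s (by omega)
    have ht' := hin t (by omega)
    simp only [List.getD_eq_getElem _ _ hp, List.getD_eq_getElem _ _ hq,
      List.getD_eq_getElem _ _ hs, List.getD_eq_getElem _ _ ht'] at h1 h2 hne
    obtain ⟨β, hx, hy⟩ := exists_renaming a b _ _ hab hne
    have l1 : p * r < q * r := Nat.mul_lt_mul_of_pos_right hpq hr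
    have l2 : q * r < s * r := Nat.mul_lt_mul_of_pos_right hqs hr
    have l3 : s * r < t * r := Nat.mul_lt_mul_of_pos_right hst hr
    have hsl := List.map_getElem_sublist (l := u)
      (is := [⟨p * r, hp⟩, ⟨q * r, hq⟩, ⟨s * r, hs⟩, ⟨t * r, ht'⟩])
      (by simp; omega)
    refine ⟨_, hsl, β, ?_⟩
    simp [← h1, ← h2, hx, hy]

/-- The extremal word `0 1 ... (n-1) (n-k) (n-k-1) ... 0`. -/
def extWord (n k q : ℕ) : ℕ := if q < n then q else 2 * n - k - q

theorem lower_bound (a b : ℕ) (hab : a ≠ b) (k r : ℕ) (hk : 2 ≤ k) (hr : 1 ≤ r) (n : ℕ) :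
    ∃ u : List ℕ, u.length = r * (n + (n + 1 - k)) ∧ ¬ Contains u [a, b, a, b] ∧
      ArithSparse k r u ∧ u.toFinset.card ≤ n := by
  set M := n + (n + 1 - k) with hM
  refine ⟨(List.range (r * M)).map (fun p => extWord n k (p / r)), by simp, ?_, ?_, ?_⟩
  · rintro ⟨w, hw, β, hβ⟩
    obtain ⟨w', hw', rfl⟩ := List.sublist_map_iff.1 hw
    have hlen : w'.length = 4 := by
      have := congrArg List.length hβ
      simpa using this.symm
    obtain ⟨p, q, s, t, rfl⟩ : ∃ p q s t, w' = [p, q, s, t] := by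
      match w', hlen with
      | [p, q, s, t], _ => exact ⟨p, q, s, t, rfl⟩
    have hsort : [p, q, s, t].Pairwise (· < ·) := List.pairwise_lt_range.sublist hw'
    have ht : t < r * M := List.mem_range.1 (hw'.subset (by simp))
    simp at hsort
    simp at hβ
    obtain ⟨e1, e2, e3, e4⟩ := hβ
    have f1 := β.injective (e1.symm.trans e3)
    have f2 := β.injective (e2.symm.trans e4)
    have f3 : extWord n k (p / r) ≠ extWord n k (q / r) := by
      intro h
      rw [h] at e1
      exact hab (e1.trans e2.symm)
    have d1 : p / r ≤ q / r := Nat.div_le_div_right (by omega)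
    have d2 : q / r ≤ s / r := Nat.div_le_div_right (by omega)
    have d3 : s / r ≤ t / r := Nat.div_le_div_right (by omega)
    have d4 : t / r < M := Nat.div_lt_of_lt_mul ht
    generalize p / r = p at *
    generalize q / r = q at *
    generalize s / r = s at *
    generalize t / r = t at *
    unfold extWord at f1 f2 f3
    split_ifs at f1 f2 f3 <;> omega
  · intro j x y hxy hyk hlt
    have hlt' : j + y * r < r * M := by simpa using hlt
    have hx : x * r ≤ y * r := Nat.mul_le_mul_right r hxy.le
    rw [List.getD_eq_getElem _ _ hlt,
      List.getD_eq_getElem _ _ (show j + x * r < _ by omega)]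
    simp only [List.getElem_map, List.getElem_range]
    rw [Nat.add_mul_div_right _ _ hr, Nat.add_mul_div_right _ _ hr]
    have d : (j + y * r) / r < M := Nat.div_lt_of_lt_mul hlt'
    rw [Nat.add_mul_div_right _ _ hr] at d
    generalize j / r = j at *
    unfold extWord
    split_ifs <;> omega
  · have : ((List.range (r * M)).map (fun p => extWord n k (p / r))).toFinset
        ⊆ Finset.range n := by
      intro z hz
      simp only [List.mem_toFinset, List.mem_map, List.mem_range] at hz
      obtain ⟨p, hp, rfl⟩ := hz
      have d : p / r < M := Nat.div_lt_of_lt_mul hp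
      rw [Finset.mem_range]
      unfold extWord
      split_ifs <;> omega
    simpa using Finset.card_le_card this

theorem ex_eq (a b : ℕ) (hab : a ≠ b) (k r : ℕ) (hk : 2 ≤ k) (hr : 1 ≤ r) (n : ℕ) :
    Ex [a, b, a, b] k r n = r * (n + (n + 1 - k)) := by
  apply IsGreatest.csSup_eq
  refine ⟨lower_bound a b hab k r hk hr n, ?_⟩
  rintro l ⟨u, rfl, h1, h2, h3⟩
  exact upper_bound a b hab k r hk hr n u h1 h2 h3

theorem stmt_5 (a b : ℕ) (hab : a ≠ b) (k r : ℕ) (hk : 2 ≤ k) (hr : 1 ≤ r) (n : ℕ) :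
    (1 ≤ n → n ≤ k - 1 → Ex [a, b, a, b] k r n = r * n) ∧
    (k ≤ n → Ex [a, b, a, b] k r n = r * (2 * n + 1 - k)) := by
  rw [ex_eq a b hab k r hk hr n]
  refine ⟨fun _ h => ?_, fun h => ?_⟩
  · congr 1; omega
  · congr 1; omega
end

section
/- Let v be a sequence that is not a blow-up of a chain, let k ≥ ||v||, and suppose n ≥ k. Then Ex_1(v,k,n) = n if and only if v is isomorphic to a sequence of the form a w a, where a is a letter and w is a chain that does not contain the letter a. -/
/-- `v` is a blow-up of a chain: `v = a₁^{s₁} a₂^{s₂} ⋯ a_m^{s_m}` where the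
`aᵢ` are pairwise distinct letters and each `sᵢ ≥ 1`. -/
def IsBlowupOfChain (v : List ℕ) : Prop :=
  ∃ (a s : List ℕ), a.Nodup ∧ (∀ x ∈ s, 1 ≤ x) ∧ a.length = s.length ∧
    v = (List.zipWith (fun x m => List.replicate m x) a s).flatten

theorem aux_perm_s11 (l₁ l₂ : List ℕ) (h₁ : l₁.Nodup) (h₂ : l₂.Nodup)
    (h : l₁.length = l₂.length) : ∃ β : ℕ ≃ ℕ, l₂ = l₁.map β := by
  have hp := Equiv.Perm.isMultiplyPretransitive ℕ l₁.length
  obtain ⟨g, hg⟩ := hp.exists_smul_eq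
    (⟨fun i => l₁.get i, List.nodup_iff_injective_get.1 h₁⟩ : Fin l₁.length ↪ ℕ)
    (⟨fun i => l₂.get (Fin.cast h i), fun i j hij => by
      have := List.nodup_iff_injective_get.1 h₂ hij
      simpa using this⟩ : Fin l₁.length ↪ ℕ)
  refine ⟨g, ?_⟩
  apply List.ext_getElem
  · simp [h]
  · intro i hi hi'
    have := DFunLike.congr_fun hg ⟨i, by omega⟩
    simp at this
    simp [this]

theorem aux_nodup_blowup (v : List ℕ) (h : v.Nodup) : IsBlowupOfChain v := by
  refine ⟨v, List.replicate v.length 1, h, ?_, by simp, ?_⟩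
  · intro x hx
    rw [List.eq_of_mem_replicate hx]
  · clear h
    induction v with
    | nil => simp
    | cons a t ih => simpa [List.replicate_succ] using ih

theorem aux_upper (v : List ℕ) (k : ℕ) (hk : v.toFinset.card ≤ k) (a : ℕ) (w : List ℕ)
    (hw : w.Nodup) (ha : a ∉ w) (hi : Isomorphic v ([a] ++ w ++ [a])) (u : List ℕ)
    (hc : ¬ Contains u v) (hs : ArithSparse k 1 u) : u.Nodup := by
  by_contra hu
  apply hc
  obtain ⟨β, hβ⟩ := hi
  have hnd : (a :: w).Nodup := List.nodup_cons.2 ⟨ha, hw⟩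
  have hcard : v.toFinset.card = w.length + 1 := by
    have h1 : (v.map β).toFinset.card = v.toFinset.card := by
      have h2 : (v.map β).toFinset = v.toFinset.image β := by ext x; simp
      rw [h2]
      exact Finset.card_image_of_injective _ β.injective
    rw [← h1, ← hβ]
    have : ([a] ++ w ++ [a]).toFinset = (a :: w).toFinset := by
      ext x; simp
    rw [this, List.toFinset_card_of_nodup hnd]; simp
  have hs' : ∀ p q : ℕ, p < q → q < p + k → (hq : q < u.length) → u[p]? ≠ u[q]? := by
    intro p q hpq hqk hq
    have := hs p 0 (q - p) (by omega) (by omega) (by omega)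
    have e : p + (q - p) = q := by omega
    simp [e, List.getD_eq_getElem?_getD] at this
    rw [List.getElem?_eq_getElem hq, List.getElem?_eq_getElem (by omega)] at this ⊢
    simpa using this
  rw [List.nodup_iff_getElem?_ne_getElem?] at hu
  push Not at hu
  obtain ⟨i, j, hij, hj, he⟩ := hu
  have hjk : i + k ≤ j := by
    by_contra hlt
    exact hs' i j hij (by omega) hj he
  have htn : ((u.drop i).take (w.length + 1)).Nodup := by
    rw [List.nodup_iff_getElem?_ne_getElem?]
    intro p q hpq hq
    simp at hq
    rw [List.getElem?_take_of_lt (by omega), List.getElem?_take_of_lt (by omega)]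
    simp only [List.getElem?_drop]
    exact hs' _ _ (by omega) (by omega) (by omega)
  obtain ⟨γ, hγ⟩ := aux_perm_s11 (a :: w) ((u.drop i).take (w.length + 1)) hnd htn
    (by simp; omega)
  have hγa : γ a = u[j] := by
    have := congrArg (fun l => l[0]?) hγ
    simp at this
    rw [he, List.getElem?_eq_getElem hj] at this
    simpa using this.symm
  refine ⟨(u.drop i).take (w.length + 1) ++ [u[j]], ?_, (β.trans γ).symm, ?_⟩
  · refine List.Sublist.trans ?_ (List.drop_sublist i u)
    conv_rhs => rw [← List.take_append_drop (w.length + 1) (u.drop i)]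
    refine List.Sublist.append (List.Sublist.refl _) ?_
    rw [List.singleton_sublist, List.drop_drop, List.mem_iff_getElem?]
    refine ⟨j - (i + (w.length + 1)), ?_⟩
    rw [List.getElem?_drop, ← List.getElem?_eq_getElem hj]
    congr 1; omega
  · have : (u.drop i).take (w.length + 1) ++ [u[j]] = v.map (β.trans γ) := by
      rw [hγ, ← hγa, Equiv.coe_trans, ← List.map_map, ← hβ]
      simp
    rw [this]
    simp [Function.comp_def]

theorem aux_free_nodup (v : List ℕ) (hv : ¬ IsBlowupOfChain v) (u : List ℕ) (hu : u.Nodup) :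
    ¬ Contains u v := by
  rintro ⟨w, hw, β, rfl⟩
  exact hv (aux_nodup_blowup _ ((hu.sublist hw).map β.injective))

theorem stmt_11 (v : List ℕ) (hv : ¬ IsBlowupOfChain v) (k n : ℕ)
    (hk : v.toFinset.card ≤ k) (hn : k ≤ n) :
    Ex v k 1 n = n ↔
      ∃ (a : ℕ) (w : List ℕ), w.Nodup ∧ a ∉ w ∧ Isomorphic v ([a] ++ w ++ [a]) := by
  constructor
  · intro hEx
    by_contra hno
    have hvne : v ≠ [] := by
      rintro rfl
      exact hv (aux_nodup_blowup _ List.nodup_nil)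
    have hkpos : 0 < k := by
      refine lt_of_lt_of_le ?_ hk
      rw [Finset.card_pos, List.toFinset_nonempty_iff]
      exact hvne
    obtain ⟨m, rfl⟩ : ∃ m, n = m + 1 := ⟨n - 1, by omega⟩
    have hmem : (m + 1 + 1) ∈ {l : ℕ | ∃ u : List ℕ,
        u.length = l ∧ ¬ Contains u v ∧ ArithSparse k 1 u ∧ u.toFinset.card ≤ m + 1} := by
      refine ⟨List.range (m + 1) ++ [0], by simp, ?_, ?_, ?_⟩
      · rintro ⟨w, hw, β, hβ⟩
        have hnd : ¬ w.Nodup := fun h => hv (by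
          rw [hβ]; exact aux_nodup_blowup _ (h.map β.injective))
        obtain ⟨w₁, w₂, rfl, h₁, h₂⟩ := List.sublist_append_iff.1 hw
        have hn₁ : w₁.Nodup := List.nodup_range.sublist h₁
        have hr : List.range (m + 1) = 0 :: (List.range m).map Nat.succ :=
          List.range_succ_eq_map
        have h₂' : w₂ = [] ∨ w₂ = [0] := by
          simpa using h₂
        rcases h₂' with rfl | rfl
        · simp at hnd; exact hnd hn₁
        · have h0 : 0 ∈ w₁ := by
            by_contra h0
            apply hnd
            rw [List.nodup_append]
            refine ⟨hn₁, by simp, ?_⟩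
            intro x hx y hy hxy
            simp at hy
            subst hy; subst hxy
            exact h0 hx
          rw [hr, List.sublist_cons_iff] at h₁
          rcases h₁ with h₁ | ⟨r, rfl, h₁⟩
          · have := h₁.subset h0
            simp at this
          · rw [List.nodup_cons] at hn₁
            refine hno ⟨0, r, hn₁.2, hn₁.1, β.symm, ?_⟩
            rw [hβ]
            simp [Function.comp_def]
      · intro j a b hab hbk hjb
        simp at hjb
        rw [mul_one, mul_one, List.getD_append _ _ _ _ (by simp; omega)]
        have e1 : (List.range (m + 1)).getD (j + a) 0 = j + a := by
          rw [List.getD_eq_getElem _ _ (by simp; omega)]; simp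
        rw [e1]
        by_cases hlt : j + b < m + 1
        · rw [List.getD_append _ _ _ _ (by simp; omega),
            List.getD_eq_getElem _ _ (by simp; omega)]
          simp; omega
        · have e : j + b = m + 1 := by omega
          rw [e, List.getD_append_right _ _ _ _ (by simp)]
          simp; omega
      · have : (List.range (m + 1) ++ [0]).toFinset ⊆ Finset.range (m + 1) := by
          intro x; simp
        simpa using Finset.card_le_card this
    unfold Ex at hEx
    by_cases hb : BddAbove {l : ℕ | ∃ u : List ℕ,
        u.length = l ∧ ¬ Contains u v ∧ ArithSparse k 1 u ∧ u.toFinset.card ≤ m + 1}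
    · have := le_csSup hb hmem
      omega
    · rw [Nat.sSup_of_not_bddAbove hb] at hEx
      omega
  · rintro ⟨a, w, hw, ha, hi⟩
    have hg : IsGreatest {l : ℕ | ∃ u : List ℕ,
        u.length = l ∧ ¬ Contains u v ∧ ArithSparse k 1 u ∧ u.toFinset.card ≤ n} n := by
      constructor
      · refine ⟨List.range n, by simp, aux_free_nodup v hv _ List.nodup_range, ?_, ?_⟩
        · intro j a b hab hbk hjb
          rw [List.length_range] at hjb
          rw [mul_one, mul_one, List.getD_eq_getElem _ _ (by simp; omega),
            List.getD_eq_getElem _ _ (by simp; omega)]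
          simp; omega
        · rw [List.toFinset_card_of_nodup List.nodup_range, List.length_range]
      · rintro l ⟨u, rfl, hc, hs, hu⟩
        rwa [List.toFinset_card_of_nodup (aux_upper v k hk a w hw ha hi u hc hs)] at hu
    exact hg.csSup_eq
end

section
/- Let v be a sequence that is not a blow-up of a chain, let k ≥ ||v||, r ≥ 1, and suppose n ≥ k. If Ex_r(v,k,n) = r·n, then v is isomorphic to a sequence of the form a w a, where a is a letter and w is a blow-up of a chain that does not contain the letter a. -/
/-- No subsequence of the form `a b a` with `a ≠ b`. -/
def NoABA (v : List ℕ) : Prop := ∀ a b : ℕ, a ≠ b → ¬ [a, b, a].Sublist v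

theorem NoABA.sub {u v : List ℕ} (h : NoABA v) (s : u.Sublist v) : NoABA u :=
  fun a b hab hs => h a b hab (hs.trans s)

theorem NoABA.map_inj {u : List ℕ} (g : ℕ → ℕ) (hg : ∀ x ∈ u, ∀ y ∈ u, g x = g y → x = y)
    (h : NoABA u) : NoABA (u.map g) := by
  intro a b hab hs
  obtain ⟨l', hl', e⟩ := List.sublist_map_iff.1 hs
  match l', e with
  | _ :: _ :: _ :: _ :: _, e => simp at e
  | [x, y, z], e =>
    simp only [List.map_cons, List.map_nil, List.cons.injEq, and_true] at e
    obtain ⟨e1, e2, e3⟩ := e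
    have hx : x ∈ u := hl'.subset (by simp)
    have hz : z ∈ u := hl'.subset (by simp)
    have : x = z := hg x hx z hz (by rw [← e1, ← e3])
    subst this
    refine h x y ?_ hl'
    rintro rfl
    exact hab (by rw [e1, e2])

theorem NoABA.sorted {u : List ℕ} (h : u.Pairwise (· ≤ ·)) : NoABA u := by
  intro a b hab hs
  have := h.sublist hs
  simp at this
  omega

theorem NoABA.blowup : ∀ v : List ℕ, NoABA v → IsBlowupOfChain v
  | [], _ => ⟨[], [], by simp, by simp, by simp, by simp⟩
  | [x], _ => ⟨[x], [1], by simp, by simp, by simp, by simp⟩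
  | x :: y :: t, h => by
    obtain ⟨a, s, ha, hs, hl, e⟩ := NoABA.blowup (y :: t) (h.sub (List.sublist_cons_self _ _))
    have hsub : ∀ (a s : List ℕ), a.length = s.length → (∀ x ∈ s, 1 ≤ x) → ∀ z ∈ a,
        z ∈ (List.zipWith (fun x m => List.replicate m x) a s).flatten := by
      intro a
      induction a with
      | nil => simp
      | cons c a ih =>
        intro s hl hs z hz
        cases s with
        | nil => simp at hl
        | cons m s =>
          simp only [List.zipWith_cons_cons, List.flatten_cons, List.mem_append]
          have hm := hs m (by simp)
          rcases List.mem_cons.1 hz with rfl | hz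
          · left; simp; omega
          · right
            exact ih s (by simpa using hl) (fun x hx => hs x (by simp [hx])) z hz
    by_cases hxy : x = y
    · subst hxy
      match a, s, hl with
      | [], [], _ => simp at e
      | c :: a, m :: s, hl =>
        have hm := hs m (by simp)
        have hc : c = x := by
          obtain ⟨m, rfl⟩ : ∃ m', m = m' + 1 := ⟨m - 1, by omega⟩
          simp [List.replicate_succ] at e
          exact e.1.symm
        subst hc
        refine ⟨c :: a, (m + 1) :: s, ha, ?_, by simpa using hl, ?_⟩
        · intro z hz
          rcases List.mem_cons.1 hz with rfl | hz
          · omega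
          · exact hs z (by simp [hz])
        · rw [e]; simp [List.replicate_succ]
    · have hx : x ∉ y :: t := by
        intro hx
        rcases List.mem_cons.1 hx with rfl | hx
        · exact hxy rfl
        · exact h x y hxy (by simpa using hx)
      refine ⟨x :: a, 1 :: s, ?_, ?_, by simpa using hl, ?_⟩
      · refine List.nodup_cons.2 ⟨fun hxa => hx ?_, ha⟩
        rw [e]; exact hsub a s hl hs x hxa
      · intro z hz
        rcases List.mem_cons.1 hz with rfl | hz
        · omega
        · exact hs z hz
      · rw [e]; simp

theorem contains_aux (v : List ℕ) (k r n c : ℕ) (hr : 1 ≤ r) (hn : k ≤ n) (hn0 : 1 ≤ n)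
    (h : Ex v k r n = r * n) :
    Contains ((List.range (r * n + 1)).map (fun i => (i + c) / r % n)) v := by
  by_contra hc
  have hpos : 0 < r * n := Nat.mul_pos hr hn0
  have hmem : r * n + 1 ∈ {l : ℕ | ∃ u : List ℕ,
      u.length = l ∧ ¬ Contains u v ∧ ArithSparse k r u ∧ u.toFinset.card ≤ n} := by
    refine ⟨_, by simp, hc, ?_, ?_⟩
    · intro j a b hab hb hj
      simp only [List.length_map, List.length_range] at hj
      have hlt : a * r ≤ b * r := Nat.mul_le_mul_right _ hab.le
      rw [List.getD_eq_getElem _ _ (by simp; omega), List.getD_eq_getElem _ _ (by simp; omega)]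
      simp only [List.getElem_map, List.getElem_range]
      have e : ∀ a, (j + a * r + c) / r = (j + c) / r + a := by
        intro a
        rw [show j + a * r + c = j + c + a * r by ring, Nat.add_mul_div_right _ _ hr]
      rw [e, e]
      intro hm
      have hm' : a ≡ b [MOD n] := Nat.ModEq.add_left_cancel' _ hm
      have := Nat.ModEq.eq_of_lt_of_lt hm' (by omega) (by omega)
      omega
    · calc _ ≤ (Finset.range n).card := by
            apply Finset.card_le_card
            intro x hx
            simp only [List.mem_toFinset, List.mem_map] at hx
            obtain ⟨i, _, rfl⟩ := hx
            exact Finset.mem_range.2 (Nat.mod_lt _ hn0)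
        _ = n := by simp
  unfold Ex at h
  by_cases hb : BddAbove {l : ℕ | ∃ u : List ℕ,
      u.length = l ∧ ¬ Contains u v ∧ ArithSparse k r u ∧ u.toFinset.card ≤ n}
  · have := le_csSup hb hmem
    omega
  · rw [Nat.sSup_of_not_bddAbove hb] at h
    omega

theorem noABA_block (r n d : ℕ) (hr : 1 ≤ r) :
    NoABA ((List.range (r * n)).map (fun i => (i / r + d) % n)) := by
  have : (List.range (r * n)).map (fun i => (i / r + d) % n) =
      ((List.range (r * n)).map (fun i => i / r)).map (fun q => (q + d) % n) := by simp
  rw [this]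
  apply NoABA.map_inj
  · intro x hx y hy hxy
    simp only [List.mem_map, List.mem_range] at hx hy
    obtain ⟨i, hi, rfl⟩ := hx
    obtain ⟨j, hj, rfl⟩ := hy
    have hm : i / r ≡ j / r [MOD n] := Nat.ModEq.add_right_cancel' d hxy
    exact Nat.ModEq.eq_of_lt_of_lt hm (Nat.div_lt_of_lt_mul hi) (Nat.div_lt_of_lt_mul hj)
  · apply NoABA.sorted
    rw [List.pairwise_map]
    exact List.pairwise_lt_range.imp (fun h => Nat.div_le_div_right h.le)

theorem stmt_12 (v : List ℕ) (hv : ¬ IsBlowupOfChain v) (k r n : ℕ)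
    (hk : v.toFinset.card ≤ k) (hr : 1 ≤ r) (hn : k ≤ n)
    (h : Ex v k r n = r * n) :
    ∃ (a : ℕ) (w : List ℕ), IsBlowupOfChain w ∧ a ∉ w ∧ Isomorphic v ([a] ++ w ++ [a]) := by
  have hP : ¬ NoABA v := fun hp => hv hp.blowup
  have hP' := hP
  unfold NoABA at hP'
  push Not at hP'
  obtain ⟨a, b, hab, hs⟩ := hP'
  have hn0 : 1 ≤ n := by
    have ha : a ∈ v.toFinset := by simpa using hs.subset (by simp)
    have := Finset.card_pos.2 ⟨a, ha⟩
    omega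
  -- `v = m ++ [a1]`
  have h1 : ∃ m a1, v = m ++ [a1] ∧ NoABA m := by
    obtain ⟨w, hw, β, rfl⟩ := contains_aux v k r n 0 hr hn hn0 h
    rw [List.range_succ, List.map_append, List.sublist_append_iff] at hw
    obtain ⟨w1, w2, rfl, hw1, hw2⟩ := hw
    have hn1 : NoABA (w1.map β) :=
      (((noABA_block r n 0 hr).sub (by simpa using hw1))).map_inj β
        (fun x _ y _ hxy => β.injective hxy)
    rcases List.sublist_singleton.1 hw2 with rfl | rfl
    · exact absurd (by simpa using hn1) hP
    · exact ⟨_, _, by rw [List.map_append]; rfl, hn1⟩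
  have h2 : ∃ a2 t, v = a2 :: t ∧ NoABA t := by
    obtain ⟨w, hw, β, rfl⟩ := contains_aux v k r n (r - 1) hr hn hn0 h
    rw [List.range_succ_eq_map, List.map_cons, List.map_map] at hw
    have e : ((fun i => (i + (r - 1)) / r % n) ∘ Nat.succ) = (fun i => (i / r + 1) % n) := by
      funext i
      simp only [Function.comp]
      rw [show i.succ + (r - 1) = i + r by omega, Nat.add_div_right _ hr]
    rw [e] at hw
    have key : ∀ w1 : List ℕ, w1.Sublist ((List.range (r * n)).map (fun i => (i / r + 1) % n)) →
        NoABA (w1.map β) := fun w1 hw1 =>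
      ((noABA_block r n 1 hr).sub hw1).map_inj β (fun x _ y _ hxy => β.injective hxy)
    rcases List.sublist_cons_iff.1 hw with hw | ⟨w1, rfl, hw1⟩
    · exact absurd (key _ hw) hP
    · exact ⟨_, _, rfl, key _ hw1⟩
  obtain ⟨m, a1, e1, hm⟩ := h1
  obtain ⟨a2, t, e2, ht⟩ := h2
  have ha1 : a1 = a := by
    rw [e1, List.sublist_append_iff] at hs
    obtain ⟨l1, l2, e, hl1, hl2⟩ := hs
    rcases List.sublist_singleton.1 hl2 with rfl | rfl
    · rw [List.append_nil] at e
      exact absurd (e ▸ hl1) (hm a b hab)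
    · have := congrArg List.getLast? e
      simpa using this.symm
  have ha2 : a2 = a := by
    rw [e2] at hs
    rcases List.sublist_cons_iff.1 hs with hs | ⟨w1, e, _⟩
    · exact absurd hs (ht a b hab)
    · simp at e
      exact e.1.symm
  subst ha1
  subst ha2
  cases m with
  | nil =>
    rw [e1] at hs
    simpa using hs.length_le
  | cons c w =>
    have e3 := e1.symm.trans e2
    simp only [List.cons_append, List.cons.injEq] at e3
    obtain ⟨rfl, rfl⟩ := e3
    refine ⟨c, w, (hm.sub (List.sublist_cons_self _ _)).blowup, ?_, Equiv.refl ℕ, ?_⟩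
    · intro hc
      have hb : b ∈ w := by
        have : b ∈ v := hs.subset (by simp)
        rw [e1] at this
        simpa [hab.symm] using this
      obtain ⟨p, q, rfl⟩ := List.append_of_mem hc
      rcases List.mem_append.1 hb with hb | hb
      · refine hm c b hab (List.Sublist.cons_cons c ?_)
        exact List.Sublist.append (l₁ := [b]) (r₁ := [c]) (by simpa using hb) (by simp)
      · have hb : b ∈ q := by simpa [hab.symm] using hb
        refine ht c b hab ?_
        rw [List.append_assoc, List.cons_append]
        refine List.Sublist.trans ?_ (List.sublist_append_right _ _)
        refine List.Sublist.cons_cons c ?_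
        exact List.Sublist.append (l₁ := [b]) (r₁ := [c]) (by simpa using hb) (by simp)
    · rw [e1]; simp
end

section
/- Let a ≠ b be two letters, k ≥ 2 and n ≥ 2k. Then Ex_2(abba,k,n) ≥ 2n+1 > 2n; indeed the sequence 1 2 ... (n-1) n 1 2 ... (n-1) n n of length 2n+1 is abba-free and (k,2)-sparse. -/
lemma w_getD (n i : ℕ) (hi : i < 2 * n + 1) :
    ((List.range n).map (· + 1) ++ (List.range n).map (· + 1) ++ [n]).getD i 0 =
      if i < n then i + 1 else if i < 2 * n then i - n + 1 else n := by
  rw [List.getD_eq_getElem _ _ (by simp; omega)]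
  split_ifs with h1 h2
  · rw [List.getElem_append_left (by simp; omega), List.getElem_append_left (by simpa using h1)]
    simp
  · rw [List.getElem_append_left (by simp; omega), List.getElem_append_right (by simp; omega)]
    simp
  · rw [List.getElem_append_right (by simp; omega)]
    simp

lemma sub_idx {u : List ℕ} {x y z t : ℕ} (h : [x, y, z, t].Sublist u) :
    ∃ p q r s, p < q ∧ q < r ∧ r < s ∧ s < u.length ∧
      u.getD p 0 = x ∧ u.getD q 0 = y ∧ u.getD r 0 = z ∧ u.getD s 0 = t := by
  obtain ⟨f, hf⟩ := List.sublist_iff_exists_fin_orderEmbedding_get_eq.1 h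
  refine ⟨f ⟨0, by simp⟩, f ⟨1, by simp⟩, f ⟨2, by simp⟩, f ⟨3, by simp⟩, ?_, ?_, ?_,
    (f _).2, ?_, ?_, ?_, ?_⟩
  · exact f.strictMono (by simp)
  · exact f.strictMono (by simp)
  · exact f.strictMono (by simp)
  all_goals
    rw [List.getD_eq_getElem _ _ (f _).2]
    exact (hf _).symm

lemma idx_sub {u : List ℕ} {p q r s : ℕ} (h1 : p < q) (h2 : q < r) (h3 : r < s)
    (h4 : s < u.length) :
    [u.getD p 0, u.getD q 0, u.getD r 0, u.getD s 0].Sublist u := by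
  have h := List.map_getElem_sublist (l := u)
    (is := [⟨p, by omega⟩, ⟨q, by omega⟩, ⟨r, by omega⟩, ⟨s, h4⟩])
    (by simp; omega)
  rw [List.getD_eq_getElem _ _ h4, List.getD_eq_getElem _ _ (show r < u.length by omega),
    List.getD_eq_getElem _ _ (show q < u.length by omega),
    List.getD_eq_getElem _ _ (show p < u.length by omega)]
  simpa using h

lemma iso_abba {a b x y : ℕ} (hab : a ≠ b) (hxy : x ≠ y) :
    Isomorphic [x, y, y, x] [a, b, b, a] := by
  have h1 : Equiv.swap x a y ≠ a := by
    intro h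
    have : Equiv.swap x a y = Equiv.swap x a x := by rw [h, Equiv.swap_apply_left]
    exact hxy ((Equiv.swap x a).injective this).symm
  refine ⟨(Equiv.swap x a).trans (Equiv.swap (Equiv.swap x a y) b), ?_⟩
  simp [Equiv.swap_apply_of_ne_of_ne h1.symm hab]

lemma len_bound_s13 (a b : ℕ) (hab : a ≠ b) (k n : ℕ) (hk : 2 ≤ k) (u : List ℕ)
    (hc : ¬ Contains u [a, b, b, a]) (hs : ArithSparse k 2 u) (hn : u.toFinset.card ≤ n) :
    u.length ≤ 3 * (n * n * 2 + 1) := by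
  by_contra! hlen
  obtain ⟨⟨x, y⟩, -, hf⟩ := Finset.exists_lt_card_fiber_of_mul_lt_card_of_maps_to
    (s := Finset.range (n * n * 2 + 1)) (t := u.toFinset ×ˢ u.toFinset) (n := 2)
    (f := fun i => (u.getD (3 * i) 0, u.getD (3 * i + 2) 0))
    (by
      intro i hi
      have hi := Finset.mem_range.1 hi
      simp only [Finset.mem_product, List.mem_toFinset]
      rw [List.getD_eq_getElem _ _ (show 3 * i < u.length by omega),
        List.getD_eq_getElem _ _ (show 3 * i + 2 < u.length by omega)]
      exact ⟨List.getElem_mem _, List.getElem_mem _⟩)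
    (by
      rw [Finset.card_product, Finset.card_range]
      have := Nat.mul_le_mul hn hn
      omega)
  have key : ∀ i j l, i < j → j < l → l < n * n * 2 + 1 →
      u.getD (3 * i) 0 = x → u.getD (3 * i + 2) 0 = y → u.getD (3 * j + 2) 0 = y →
      u.getD (3 * l) 0 = x → False := by
    intro i j l hij hjl hl e1 e2 e3 e4
    have hxy : x ≠ y := by
      have := hs (3 * i) 0 1 (by omega) (by omega) (by omega)
      rwa [Nat.zero_mul, Nat.add_zero, Nat.one_mul, e1, e2] at this
    have hsub := idx_sub (u := u) (p := 3 * i) (q := 3 * i + 2) (r := 3 * j + 2) (s := 3 * l)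
      (by omega) (by omega) (by omega) (by omega)
    rw [e1, e2, e3, e4] at hsub
    exact hc ⟨_, hsub, iso_abba hab hxy⟩
  obtain ⟨i, hi, j, hj, l, hl, h1, h2, h3⟩ := Finset.two_lt_card.1 hf
  simp only [Finset.mem_filter, Finset.mem_range, Prod.mk.injEq] at hi hj hl
  obtain ⟨hi, i1, i2⟩ := hi
  obtain ⟨hj, j1, j2⟩ := hj
  obtain ⟨hl, l1, l2⟩ := hl
  rcases lt_or_gt_of_ne h1 with h1 | h1 <;> rcases lt_or_gt_of_ne h2 with h2 | h2 <;>
    rcases lt_or_gt_of_ne h3 with h3 | h3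
  · exact key i j l h1 h3 hl i1 i2 j2 l1
  · exact key i l j h2 h3 hj i1 i2 l2 j1
  · omega
  · exact key l i j h2 h1 hj l1 l2 i2 j1
  · exact key j i l h1 h2 hl j1 j2 i2 l1
  · omega
  · exact key j l i h3 h2 hi j1 j2 l2 i1
  · exact key l j i h3 h1 hi l1 l2 j2 i1

theorem stmt_13 (a b : ℕ) (hab : a ≠ b) (k n : ℕ) (hk : 2 ≤ k) (hn : 2 * k ≤ n) :
    2 * n + 1 ≤ Ex [a, b, b, a] k 2 n ∧ 2 * n < Ex [a, b, b, a] k 2 n ∧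
    (let w : List ℕ := (List.range n).map (· + 1) ++ (List.range n).map (· + 1) ++ [n];
      w.length = 2 * n + 1 ∧ ¬ Contains w [a, b, b, a] ∧ ArithSparse k 2 w ∧
      w.toFinset.card ≤ n) := by
  have hw : (let w : List ℕ := (List.range n).map (· + 1) ++ (List.range n).map (· + 1) ++ [n];
      w.length = 2 * n + 1 ∧ ¬ Contains w [a, b, b, a] ∧ ArithSparse k 2 w ∧
      w.toFinset.card ≤ n) := by
    intro w
    have hlen : w.length = 2 * n + 1 := by simp [w]; omega
    have hg : ∀ i, i < 2 * n + 1 → w.getD i 0 =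
        if i < n then i + 1 else if i < 2 * n then i - n + 1 else n := w_getD n
    refine ⟨hlen, ?_, ?_, ?_⟩
    · rintro ⟨v, hv, β, hβ⟩
      have hl : v.length = 4 := by simpa using (congrArg List.length hβ).symm
      obtain ⟨x, y, z, t, rfl⟩ : ∃ x y z t, v = [x, y, z, t] := by
        match v, hl with
        | [x, y, z, t], _ => exact ⟨x, y, z, t, rfl⟩
      simp only [List.map_cons, List.map_nil, List.cons.injEq, and_true] at hβ
      obtain ⟨e1, e2, e3, e4⟩ := hβ
      have hxt : x = t := β.injective (by rw [← e1, ← e4])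
      have hyz : y = z := β.injective (by rw [← e2, ← e3])
      obtain ⟨p, q, r, s, h1, h2, h3, h4, g1, g2, g3, g4⟩ := sub_idx hv
      rw [hlen] at h4
      rw [hg _ (by omega)] at g1 g2 g3 g4
      split_ifs at g1 g2 g3 g4 <;> omega
    · intro j c d hcd hd hj
      rw [hlen] at hj
      rw [hg _ (by omega), hg _ (by omega)]
      split_ifs <;> omega
    · have : w.toFinset ⊆ Finset.Icc 1 n := by
        intro i hi
        simp [w] at hi
        rw [Finset.mem_Icc]
        rcases hi with ⟨c, hc, rfl⟩ | hi
        · omega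
        · omega
      simpa using Finset.card_le_card this
  have hex : 2 * n + 1 ≤ Ex [a, b, b, a] k 2 n := by
    apply le_csSup
    · refine ⟨3 * (n * n * 2 + 1), ?_⟩
      rintro l ⟨u, rfl, hc, hs, hcard⟩
      exact len_bound_s13 a b hab k n hk u hc hs hcard
    · exact ⟨_, hw⟩
  exact ⟨hex, by omega, hw⟩
end

section
/- Let a ≠ b be two letters, k ≥ 2 and r ≥ 5. Then for every n ≥ 1, Ex_r(abba,k,n) = r·n. -/
namespace AbbaProof

open Finset

/-- positions of the letter `x` -/
def P (w : ℕ → ℕ) (L x : ℕ) : Finset ℕ := (range L).filter (fun i => w i = x)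

theorem mem_P {w : ℕ → ℕ} {L x i : ℕ} : i ∈ P w L x ↔ i < L ∧ w i = x := by
  simp [P]

/-- index form of being free of the pattern abba -/
def Free (w : ℕ → ℕ) (L : ℕ) : Prop :=
  ∀ i j k l, i < j → j < k → k < l → l < L → w i = w l → w j = w k → w i = w j

open Classical in
/-- positions strictly inside the span of `x`, with a letter of multiplicity at most two -/
noncomputable def D (w : ℕ → ℕ) (L x : ℕ) : Finset ℕ := (range L).filter (fun q =>
  w q ≠ x ∧ (P w L (w q)).card ≤ 2 ∧ (∃ i, i < q ∧ w i = x) ∧ (∃ i, q < i ∧ i < L ∧ w i = x))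

theorem mem_D {w : ℕ → ℕ} {L x q : ℕ} : q ∈ D w L x ↔ q < L ∧ 
  w q ≠ x ∧ (P w L (w q)).card ≤ 2 ∧ (∃ i, i < q ∧ w i = x) ∧ (∃ i, q < i ∧ i < L ∧ w i = x) := by
  simp [D]

theorem exists_two {w : ℕ → ℕ} {L x : ℕ} (h : 3 ≤ (P w L x).card) (q : ℕ) :
    ∃ i j, i < j ∧ j < L ∧ w i = x ∧ w j = x ∧ i ≠ q ∧ j ≠ q := by
  have h1 : 1 < ((P w L x).erase q).card := by
    have := Finset.pred_card_le_card_erase (s := P w L x) (a := q)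
    omega
  obtain ⟨i, hi, j, hj, hij⟩ := Finset.one_lt_card.1 h1
  rw [mem_erase, mem_P] at hi hj
  rcases lt_or_gt_of_ne hij with h | h
  · exact ⟨i, j, h, hj.2.1, hi.2.2, hj.2.2, hi.1, hj.1⟩
  · exact ⟨j, i, h, hi.2.1, hj.2.2, hi.2.2, hj.1, hi.1⟩

theorem types {w : ℕ → ℕ} {L : ℕ} (H : Free w L) {f l q : ℕ} (hfq : f < q) (hql : q < l)
    (hl : l < L) (hw : w f = w l) (hne : w q ≠ w f) (h3 : 3 ≤ (P w L (w q)).card) :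
    (∃ i j, i < j ∧ j < f ∧ w i = w q ∧ w j = w q) ∨
    (∃ i j, l < i ∧ i < j ∧ j < L ∧ w i = w q ∧ w j = w q) := by
  obtain ⟨i, j, hij, hj, hwi, hwj, hiq, hjq⟩ := exists_two h3 q
  have out : ∀ t, w t = w q → t ≠ q → t < f ∨ l < t := by
    intro t ht htq
    by_contra hc
    push Not at hc
    have h1 : t ≠ f := by rintro rfl; exact hne ht.symm
    have h2 : t ≠ l := by rintro rfl; exact hne (by rw [hw, ht])
    rcases lt_or_gt_of_ne htq with h | h
    · exact hne (by rw [H f t q l (by omega) h hql hl hw ht, ht])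
    · exact hne (H f q t l hfq h (by omega) hl hw ht.symm).symm
  rcases out i hwi hiq with h1 | h1
  · rcases out j hwj hjq with h2 | h2
    · exact Or.inl ⟨i, j, hij, h2, hwi, hwj⟩
    · exact absurd (H i f l j h1 (by omega) h2 hj (by rw [hwi, hwj]) hw) (by rw [hwi]; exact hne)
  · exact Or.inr ⟨i, j, h1, hij, hj, hwi, hwj⟩

theorem right_unique {w : ℕ → ℕ} {L : ℕ} (H : Free w L) {f l q q' : ℕ} (hfq : f < q)
    (hqq : q < q') (hql : q' < l) (hl : l < L) (hw : w f = w l) (hne : w q ≠ w f)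
    (h : ∃ i j, l < i ∧ i < j ∧ j < L ∧ w i = w q ∧ w j = w q)
    (h' : ∃ i j, l < i ∧ i < j ∧ j < L ∧ w i = w q' ∧ w j = w q') : False := by
  obtain ⟨i, j, h1, h2, h3, h4, h5⟩ := h
  obtain ⟨i', j', h1', h2', h3', h4', h5'⟩ := h'
  have hz : w q ≠ w q' := fun e => hne (H f q q' l hfq hqq hql hl hw e).symm
  rcases lt_trichotomy i' j with h | h | h
  · exact hz (H q q' i' j hqq (by omega) h h3 h5.symm h4'.symm)
  · subst h; exact hz (h5.symm.trans h4')
  · exact hz (h4.symm.trans (H q' i j i' (by omega) h2 h (by omega) h4'.symm (by rw [h4, h5])).symm)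

theorem left_unique {w : ℕ → ℕ} {L : ℕ} (H : Free w L) {f l q q' : ℕ} (hfq : f < q)
    (hqq : q < q') (hql : q' < l) (hl : l < L) (hw : w f = w l) (hne : w q ≠ w f)
    (h : ∃ i j, i < j ∧ j < f ∧ w i = w q ∧ w j = w q)
    (h' : ∃ i j, i < j ∧ j < f ∧ w i = w q' ∧ w j = w q') : False := by
  obtain ⟨i, j, h2, h3, h4, h5⟩ := h
  obtain ⟨i', j', h2', h3', h4', h5'⟩ := h'
  have hz : w q ≠ w q' := fun e => hne (H f q q' l hfq hqq hql hl hw e).symm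
  rcases lt_trichotomy i i' with h | h | h
  · exact hz (by rw [← h4, ← h4']; exact H i i' j' q h h2' (by omega) (by omega) h4 (by rw [h4', h5']))
  · subst h; exact hz (h4.symm.trans h4')
  · exact hz (by rw [← h4, ← h4']; exact (H i' i j q' h h2 (by omega) (by omega) h4' (by rw [h4, h5])).symm)

theorem big_bound {w : ℕ → ℕ} {L r : ℕ} (hr : 5 ≤ r) (H : Free w L)
    (S : ∀ j, j + r < L → w j ≠ w (j + r)) (x : ℕ) (hx : r < (P w L x).card) :
    (P w L x).card ≤ r + (D w L x).card := by
  classical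
  have hne : (P w L x).Nonempty := Finset.card_pos.1 (by omega)
  obtain ⟨f, hf, hfmin⟩ : ∃ f ∈ P w L x, ∀ p ∈ P w L x, f ≤ p :=
    ⟨_, Finset.min'_mem _ hne, fun p hp => Finset.min'_le _ p hp⟩
  obtain ⟨l, hl, hlmax⟩ : ∃ l ∈ P w L x, ∀ p ∈ P w L x, p ≤ l :=
    ⟨_, Finset.max'_mem _ hne, fun p hp => Finset.le_max' _ p hp⟩
  rw [mem_P] at hf hl
  have hwfl : w f = w l := by rw [hf.2, hl.2]
  obtain ⟨p, hp1, hp2, hpx⟩ : ∃ p, f < p ∧ p < l ∧ w p = x := by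
    obtain ⟨i, j, hij, hj, hwi, hwj, hif, hjf⟩ := exists_two (show 3 ≤ (P w L x).card by omega) f
    have h1 := hfmin i (mem_P.2 ⟨by omega, hwi⟩)
    have h2 := hlmax j (mem_P.2 ⟨by omega, hwj⟩)
    exact ⟨i, by omega, by omega, hwi⟩
  let Q : Finset ℕ := (range L).filter (fun q => f ≤ q ∧ q + r ∈ P w L x)
  have hQ : ∀ q ∈ Q, f < q ∧ q < l ∧ w q ≠ x ∧ q + r ≤ l ∧ w (q + r) = x := by
    intro q hq
    simp only [Q, mem_filter, mem_range] at hq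
    obtain ⟨_, h2, h3⟩ := hq
    have h4 := hlmax _ h3
    rw [mem_P] at h3
    have h5 : w q ≠ x := by rw [← h3.2]; exact S q h3.1
    have : q ≠ f := by rintro rfl; exact h5 hf.2
    exact ⟨by omega, by omega, h5, h4, h3.2⟩
  let Lt : ℕ → Prop := fun q => ∃ i j, i < j ∧ j < f ∧ w i = w q ∧ w j = w q
  let Rt : ℕ → Prop := fun q => ∃ i j, l < i ∧ i < j ∧ j < L ∧ w i = w q ∧ w j = w q
  have hcardQ : ((P w L x).filter (fun p => f + r ≤ p)).card ≤ Q.card := by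
    apply Finset.card_le_card_of_injOn (fun p => p - r)
    · intro p hp
      have hp' := Finset.mem_filter.1 (Finset.mem_coe.1 hp)
      have hp2 := mem_P.1 hp'.1
      simp only [Q, Finset.coe_filter, Set.mem_ofPred_eq, mem_range]
      refine ⟨by omega, by omega, ?_⟩
      rw [Nat.sub_add_cancel (by omega)]
      exact hp'.1
    · intro p hp p' hp' h
      have h1 := (Finset.mem_filter.1 (Finset.mem_coe.1 hp)).2
      have h2 := (Finset.mem_filter.1 (Finset.mem_coe.1 hp')).2
      simp only at h
      omega
  have hsplit : ((P w L x).filter (fun p => p < f + r)).card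
      + ((P w L x).filter (fun p => f + r ≤ p)).card = (P w L x).card := by
    rw [← Finset.card_filter_add_card_filter_not (s := P w L x) (fun p => p < f + r)]
    simp only [not_lt]
  let Qd := Q.filter (fun q => (P w L (w q)).card ≤ 2)
  have hQsub : Q ⊆ Qd ∪ Q.filter Lt ∪ Q.filter Rt := by
    intro q hq
    obtain ⟨h1, h2, h3, -, -⟩ := hQ q hq
    by_cases hc : (P w L (w q)).card ≤ 2
    · simp [Qd, hq, hc]
    · rcases types H h1 h2 hl.1 hwfl (by rw [hf.2]; exact h3) (by omega) with h | h
      · have : Lt q := h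
        simp [hq, this]
      · have : Rt q := h
        simp [hq, this]
  have hQcard : Q.card ≤ Qd.card + (Q.filter Lt).card + (Q.filter Rt).card := by
    have a1 := Finset.card_le_card hQsub
    have a2 := Finset.card_union_le (Qd ∪ Q.filter Lt) (Q.filter Rt)
    have a3 := Finset.card_union_le Qd (Q.filter Lt)
    omega
  have hLt1 : (Q.filter Lt).card ≤ 1 := by
    rw [Finset.card_le_one]
    intro q hq q' hq'
    rw [mem_filter] at hq hq'
    obtain ⟨h1, h2, h3, -, -⟩ := hQ q hq.1
    obtain ⟨h1', h2', h3', -, -⟩ := hQ q' hq'.1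
    by_contra hcc
    rcases lt_or_gt_of_ne hcc with h | h
    · exact left_unique H h1 h h2' hl.1 hwfl (by rw [hf.2]; exact h3) hq.2 hq'.2
    · exact left_unique H h1' h h2 hl.1 hwfl (by rw [hf.2]; exact h3') hq'.2 hq.2
  have hRt1 : (Q.filter Rt).card ≤ 1 := by
    rw [Finset.card_le_one]
    intro q hq q' hq'
    rw [mem_filter] at hq hq'
    obtain ⟨h1, h2, h3, -, -⟩ := hQ q hq.1
    obtain ⟨h1', h2', h3', -, -⟩ := hQ q' hq'.1
    by_contra hcc
    rcases lt_or_gt_of_ne hcc with h | h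
    · exact right_unique H h1 h h2' hl.1 hwfl (by rw [hf.2]; exact h3) hq.2 hq'.2
    · exact right_unique H h1' h h2 hl.1 hwfl (by rw [hf.2]; exact h3') hq'.2 hq.2
  have hsub1 : (P w L x).filter (fun p => p < f + r) ⊆ Finset.Ico f (f + r) := by
    intro t ht
    rw [mem_filter] at ht
    rw [Finset.mem_Ico]
    exact ⟨hfmin t ht.1, ht.2⟩
  have claimA : ((P w L x).filter (fun p => p < f + r)).card + (Q.filter Lt).card ≤ r := by
    rcases (Q.filter Lt).eq_empty_or_nonempty with he | ⟨q, hq⟩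
    · have := Finset.card_le_card hsub1
      rw [Nat.card_Ico] at this
      rw [he, Finset.card_empty]
      omega
    · rw [mem_filter] at hq
      obtain ⟨h1, h2, h3, -, -⟩ := hQ q hq.1
      have hsub2 : (P w L x).filter (fun p => p < f + r) ⊆ (Finset.Ico f (f + r)).erase (f + 1) := by
        intro t ht
        rw [Finset.mem_erase]
        refine ⟨?_, hsub1 ht⟩
        rintro rfl
        rw [mem_filter, mem_P] at ht
        obtain ⟨i, j, hij, hj, hwi, hwj⟩ := hq.2
        have h6 : q ≠ f + 1 := by rintro rfl; exact h3 ht.1.2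
        have := H i f (f+1) q (by omega) (by omega) (by omega) (by omega) hwi (by rw [hf.2, ht.1.2])
        rw [hwi, hf.2] at this
        exact h3 this
      have := Finset.card_le_card hsub2
      rw [Finset.card_erase_of_mem (by rw [Finset.mem_Ico]; omega), Nat.card_Ico] at this
      omega
  have hsubD : Qd ⊆ D w L x := by
    intro q hq
    rw [mem_filter] at hq
    obtain ⟨h1, h2, h3, -, -⟩ := hQ q hq.1
    rw [mem_D]
    exact ⟨by omega, h3, hq.2, ⟨f, h1, hf.2⟩, ⟨l, h2, hl.1, hl.2⟩⟩
  have claimB : Qd.card + (Q.filter Rt).card ≤ (D w L x).card := by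
    rcases (Q.filter Rt).eq_empty_or_nonempty with he | ⟨q, hq⟩
    · have := Finset.card_le_card hsubD
      rw [he, Finset.card_empty]
      omega
    · rw [mem_filter] at hq
      obtain ⟨h1, h2, h3, h4, h5⟩ := hQ q hq.1
      have hR := hq.2
      obtain ⟨i, j, hli, hij, hj, hwi, hwj⟩ := hq.2
      have gap : ∀ t, q < t → t < l → w t ≠ x := by
        intro t ht1 ht2 ht
        have := H q t l i ht1 ht2 hli (by omega) hwi.symm (by rw [ht, hl.2])
        exact h3 (this.trans ht)
      have hpq : p < q := by
        rcases lt_trichotomy p q with h | h | h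
        · exact h
        · subst h; exact absurd hpx h3
        · exact absurd hpx (gap p h hp2)
      have hnew : l - 1 ∈ D w L x := by
        have hlx := gap (l-1) (by omega) (by omega)
        rw [mem_D]
        refine ⟨by omega, hlx, ?_, ⟨f, by omega, hf.2⟩, ⟨l, by omega, hl.1, hl.2⟩⟩
        by_contra hc
        rcases types H (q := l-1) (by omega) (by omega) hl.1 hwfl (by rw [hf.2]; exact hlx) (by omega) with h | h
        · obtain ⟨i', j', hij', hj', hwi', hwj'⟩ := h
          have := H i' f p (l-1) (by omega) hp1 (by omega) (by omega) hwi' (by rw [hf.2, hpx])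
          rw [hwi', hf.2] at this
          exact hlx this
        · exact right_unique H h1 (by omega) (by omega) hl.1 hwfl (by rw [hf.2]; exact h3) hR h
      have hnot : l - 1 ∉ Qd := by
        intro hm
        rw [mem_filter] at hm
        have := hQ _ hm.1
        omega
      have := Finset.card_le_card (Finset.insert_subset hnew hsubD)
      rw [Finset.card_insert_of_notMem hnot] at this
      omega
  omega

/-- two occurrences before `q` -/
def TL (w : ℕ → ℕ) (q x : ℕ) : Prop := ∃ i j, i < j ∧ j < q ∧ w i = x ∧ w j = x
/-- two occurrences after `q` -/
def TR (w : ℕ → ℕ) (L q x : ℕ) : Prop := ∃ i j, q < i ∧ i < j ∧ j < L ∧ w i = x ∧ w j = x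

theorem notTLTL {w : ℕ → ℕ} {L q A B : ℕ} (H : Free w L) (hAB : A ≠ B)
    (hA : q ∈ D w L A) (hB : q ∈ D w L B) (h1 : TL w q A) (h2 : TL w q B) : False := by
  rw [mem_D] at hA hB
  obtain ⟨-, -, -, -, a, ha1, ha2, ha3⟩ := hA
  obtain ⟨-, -, -, -, b, hb1, hb2, hb3⟩ := hB
  obtain ⟨i, j, hij, hj, hwi, hwj⟩ := h1
  obtain ⟨i', j', hij', hj', hwi', hwj'⟩ := h2
  unfold Free at H
  rcases lt_trichotomy a b with h | h | h
  · rcases lt_trichotomy j i' with h' | h' | h'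
    · have := H j i' j' a (by omega) (by omega) (by omega) (by omega) (by simp [*]) (by simp [*])
      simp_all
    · subst h'; simp_all
    · have := H i' j a b (by omega) (by omega) (by omega) (by omega) (by simp [*]) (by simp [*])
      simp_all
  · subst h; simp_all
  · rcases lt_trichotomy j' i with h' | h' | h'
    · have := H j' i j b (by omega) (by omega) (by omega) (by omega) (by simp [*]) (by simp [*])
      simp_all
    · subst h'; simp_all
    · have := H i j' b a (by omega) (by omega) (by omega) (by omega) (by simp [*]) (by simp [*])
      simp_all

theorem notTRTR {w : ℕ → ℕ} {L q A B : ℕ} (H : Free w L) (hAB : A ≠ B)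
    (hA : q ∈ D w L A) (hB : q ∈ D w L B) (h1 : TR w L q A) (h2 : TR w L q B) : False := by
  rw [mem_D] at hA hB
  obtain ⟨-, -, -, ⟨a, ha1, ha3⟩, -⟩ := hA
  obtain ⟨-, -, -, ⟨b, hb1, hb3⟩, -⟩ := hB
  obtain ⟨i, j, hi, hij, hj, hwi, hwj⟩ := h1
  obtain ⟨i', j', hi', hij', hj', hwi', hwj'⟩ := h2
  unfold Free at H
  rcases lt_trichotomy a b with h | h | h
  · rcases lt_trichotomy i j' with h' | h' | h'
    · have := H b a i j'
      have := H a b i' i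
      have := H b i j j'
      rcases lt_trichotomy i i' with h'' | h'' | h''
      · rcases lt_trichotomy j i' with h4 | h4 | h4
        · have := H b i j i' (by omega) (by omega) (by omega) (by omega) (by simp [*]) (by simp [*])
          simp_all
        · subst h4; simp_all
        · have := H a b i' j (by omega) (by omega) (by omega) (by omega) (by simp [*]) (by simp [*])
          simp_all
      · subst h''; simp_all
      · have := H a b i' i (by omega) (by omega) (by omega) (by omega) (by simp [*]) (by simp [*])
        simp_all
    · subst h'; simp_all
    · have := H a b j' i (by omega) (by omega) (by omega) (by omega) (by simp [*]) (by simp [*])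
      simp_all
  · subst h; simp_all
  · rcases lt_trichotomy i' j with h' | h' | h'
    · have := H b a i j' 
      rcases lt_trichotomy j' i with h4 | h4 | h4
      · have := H a i' j' i (by omega) (by omega) (by omega) (by omega) (by simp [*]) (by simp [*])
        simp_all
      · subst h4; simp_all
      · have := H b a i j' (by omega) (by omega) (by omega) (by omega) (by simp [*]) (by simp [*])
        simp_all
    · subst h'; simp_all
    · have := H b a i i' (by omega) (by omega) (by omega) (by omega) (by simp [*]) (by simp [*])
      simp_all

theorem TLorTR {w : ℕ → ℕ} {L q A : ℕ} (h3 : 3 ≤ (P w L A).card) (hA : q ∈ D w L A) :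
    TL w q A ∨ TR w L q A := by
  rw [mem_D] at hA
  obtain ⟨-, hqA, -, -, -⟩ := hA
  obtain ⟨i, j, hij, hj, hwi, hwj, hi', hj'⟩ := exists_two h3 q
  by_cases h1 : j < q
  · exact Or.inl ⟨i, j, hij, h1, hwi, hwj⟩
  · by_cases h2 : q < i
    · exact Or.inr ⟨i, j, h2, hij, hj, hwi, hwj⟩
    ·
      have hsub : ¬ (P w L A ⊆ {i, j}) := by
        intro hs
        have := (Finset.card_le_card hs).trans Finset.card_le_two
        omega
      obtain ⟨t, ht, htn⟩ := Finset.not_subset.1 hsub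
      rw [mem_P] at ht
      simp only [Finset.mem_insert, Finset.mem_singleton, not_or] at htn
      have htq : t ≠ q ∨ t = q := by omega
      rcases htq with htq | htq
      · rcases lt_or_gt_of_ne htq with h | h
        · rcases lt_or_gt_of_ne htn.1 with h' | h'
          · exact Or.inl ⟨t, i, h', by omega, ht.2, hwi⟩
          · exact Or.inl ⟨i, t, h', by omega, hwi, ht.2⟩
        · rcases lt_or_gt_of_ne htn.2 with h' | h'
          · exact Or.inr ⟨t, j, h, h', hj, ht.2, hwj⟩
          · exact Or.inr ⟨j, t, by omega, h', ht.1, hwj, ht.2⟩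
      · subst htq
        exact absurd ht.2 hqA


theorem cov {w : ℕ → ℕ} {L q : ℕ} (H : Free w L) (B : Finset ℕ)
    (hB : ∀ x ∈ B, 3 ≤ (P w L x).card ∧ q ∈ D w L x) :
    B.card ≤ if (P w L (w q)).card ≤ 2 then 3 - (P w L (w q)).card else 0 := by
  classical
  rcases B.eq_empty_or_nonempty with rfl | ⟨x0, hx0⟩
  · simp
  have hD0 := mem_D.1 (hB x0 hx0).2
  rw [if_pos hD0.2.2.1]
  have hpos : 1 ≤ (P w L (w q)).card := Finset.card_pos.2 ⟨q, mem_P.2 ⟨hD0.1, rfl⟩⟩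
  have h2 : B.card ≤ 2 := by
    by_contra hc
    obtain ⟨x, y, z, hx, hy, hz, hxy, hxz, hyz⟩ := Finset.two_lt_card_iff.1 (not_le.1 hc)
    have ox := TLorTR (hB x hx).1 (hB x hx).2
    have oy := TLorTR (hB y hy).1 (hB y hy).2
    have oz := TLorTR (hB z hz).1 (hB z hz).2
    have a1 := notTLTL H hxy (hB x hx).2 (hB y hy).2
    have a2 := notTLTL H hxz (hB x hx).2 (hB z hz).2
    have a3 := notTLTL H hyz (hB y hy).2 (hB z hz).2
    have b1 := notTRTR H hxy (hB x hx).2 (hB y hy).2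
    have b2 := notTRTR H hxz (hB x hx).2 (hB z hz).2
    have b3 := notTRTR H hyz (hB y hy).2 (hB z hz).2
    rcases ox with ox | ox <;> rcases oy with oy | oy <;> rcases oz with oz | oz <;>
      first
      | exact a1 ox oy
      | exact a2 ox oz
      | exact a3 oy oz
      | exact b1 ox oy
      | exact b2 ox oz
      | exact b3 oy oz
  by_cases h1 : (P w L (w q)).card = 1
  · omega
  have h1' : 1 < (P w L (w q)).card := by omega
  obtain ⟨q', hq', hne⟩ := Finset.exists_mem_ne h1' q
  rw [mem_P] at hq'
  have key : ∀ x ∈ B, (TL w q x → q < q') ∧ (TR w L q x → q' < q) := by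
    intro x hx
    obtain ⟨hq, hqx, -, ⟨a, ha1, ha2⟩, b, hb1, hb2, hb3⟩ := mem_D.1 (hB x hx).2
    constructor
    · rintro ⟨i, j, hij, hj, hwi, hwj⟩
      by_contra hc
      rcases lt_trichotomy q' i with h | h | h
      · have := H q' i j q h hij hj hq hq'.2 (by rw [hwi, hwj])
        rw [hq'.2, hwi] at this
        exact hqx this
      · subst h; exact hqx (hq'.2.symm.trans hwi)
      · have := H i q' q b h (by omega) hb1 hb2 (by rw [hwi, hb3]) hq'.2
        rw [hq'.2, hwi] at this
        exact hqx this.symm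
    · rintro ⟨i, j, hi, hij, hj, hwi, hwj⟩
      by_contra hc
      rcases lt_trichotomy q' j with h | h | h
      · have := H a q q' j ha1 (by omega) h hj (by rw [ha2, hwj]) hq'.2.symm
        rw [ha2] at this
        exact hqx this.symm
      · subst h; exact hqx (hq'.2.symm.trans hwj)
      · have := H q i j q' hi hij h hq'.1 hq'.2.symm (by rw [hwi, hwj])
        rw [hwi] at this
        exact hqx this
  have : B.card ≤ 1 := by
    rw [Finset.card_le_one]
    intro x hx y hy
    by_contra hxy
    have ox := TLorTR (hB x hx).1 (hB x hx).2
    have oy := TLorTR (hB y hy).1 (hB y hy).2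
    have a1 := notTLTL H hxy (hB x hx).2 (hB y hy).2
    have b1 := notTRTR H hxy (hB x hx).2 (hB y hy).2
    have kx := key x hx
    have ky := key y hy
    rcases ox with ox | ox <;> rcases oy with oy | oy
    · exact a1 ox oy
    · exact absurd (kx.1 ox) (not_lt.2 (ky.2 oy).le)
    · exact absurd (ky.1 oy) (not_lt.2 (kx.2 ox).le)
    · exact b1 ox oy
  omega

theorem upper {w : ℕ → ℕ} {L r : ℕ} (hr : 5 ≤ r) (H : Free w L)
    (S : ∀ j, j + r < L → w j ≠ w (j + r)) : L ≤ r * ((range L).image w).card := by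
  classical
  set X := (range L).image w with hX
  let m : ℕ → ℕ := fun x => (P w L x).card
  let g : ℕ → ℕ := fun z => if m z ≤ 2 then 3 - m z else 0
  have e1 : L = ∑ x ∈ X, m x := by
    have := Finset.card_eq_sum_card_image w (range L)
    rw [Finset.card_range] at this
    exact this
  have e2 : ∑ q ∈ range L, g (w q) = ∑ z ∈ X, m z * g z := by
    rw [Finset.sum_comp g w]
    rfl
  have e3 : ∑ x ∈ X.filter (fun x => r < m x), (D w L x).card ≤ ∑ q ∈ range L, g (w q) := by
    have h1 := Finset.sum_card_bipartiteAbove_eq_sum_card_bipartiteBelow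
      (s := X.filter (fun x => r < m x)) (t := range L) (fun x q => q ∈ D w L x)
    have h2 : ∀ x, (range L).bipartiteAbove (fun x q => q ∈ D w L x) x = D w L x := by
      intro x
      ext q
      simp only [Finset.bipartiteAbove, mem_filter, mem_range, and_iff_right_iff_imp]
      intro h
      exact (mem_D.1 h).1
    simp only [h2] at h1
    rw [h1]
    apply Finset.sum_le_sum
    intro q _
    apply cov H
    intro x hx
    simp only [Finset.bipartiteBelow, mem_filter] at hx
    have : r < (P w L x).card := hx.1.2
    exact ⟨by omega, hx.2⟩
  have e4 : ∑ x ∈ X, (m x + m x * g x) ≤ ∑ x ∈ X, (r + if r < m x then (D w L x).card else 0) := by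
    apply Finset.sum_le_sum
    intro x _
    by_cases hb : r < m x
    · have h5 : ¬ m x ≤ 2 := by omega
      simp only [g, if_pos hb, if_neg h5]
      have : m x ≤ r + (D w L x).card := big_bound hr H S x hb
      omega
    · simp only [g, if_neg hb]
      by_cases h5 : m x ≤ 2
      · rw [if_pos h5]
        generalize m x = t at *
        interval_cases t <;> omega
      · rw [if_neg h5]
        omega
  rw [Finset.sum_add_distrib, Finset.sum_add_distrib, ← Finset.sum_filter, Finset.sum_const,
    smul_eq_mul, ← e1, ← e2, mul_comm] at e4
  omega

theorem free_of {u : List ℕ} {a b : ℕ} (hab : a ≠ b) (h : ¬ Contains u [a, b, b, a]) :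
    Free (fun i => u.getD i 0) u.length := by
  intro i j k l hij hjk hkl hl h1 h2
  by_contra hne
  simp only at h1 h2 hne
  apply h
  refine ⟨[u.getD i 0, u.getD j 0, u.getD k 0, u.getD l 0], ?_, ?_⟩
  · rw [List.sublist_iff_exists_fin_orderEmbedding_get_eq]
    let F : Fin 4 → Fin u.length := ![⟨i, by omega⟩, ⟨j, by omega⟩, ⟨k, by omega⟩, ⟨l, hl⟩]
    have hF : StrictMono F := by
      rw [Fin.strictMono_iff_lt_succ]
      intro t
      fin_cases t <;> simp [F, hij, hjk, hkl]
    refine ⟨OrderEmbedding.ofStrictMono F hF, ?_⟩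
    intro t
    have hi : i < u.length := by omega
    have hj : j < u.length := by omega
    have hk : k < u.length := by omega
    change Fin 4 at t
    fin_cases t <;> simp [F, hi, hj, hk, hl]
  · rw [← h1, ← h2]
    generalize u.getD i 0 = c at *
    generalize u.getD j 0 = d at *
    refine ⟨(Equiv.swap c a).trans (Equiv.swap (Equiv.swap c a d) b), ?_⟩
    have hd : a ≠ Equiv.swap c a d := by
      intro e
      have : Equiv.swap c a c = Equiv.swap c a d := by rw [Equiv.swap_apply_left]; exact e
      exact hne ((Equiv.swap c a).injective this)
    have e1 : ((Equiv.swap c a).trans (Equiv.swap (Equiv.swap c a d) b)) c = a := by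
      rw [Equiv.trans_apply, Equiv.swap_apply_left, Equiv.swap_apply_of_ne_of_ne hd hab]
    have e2 : ((Equiv.swap c a).trans (Equiv.swap (Equiv.swap c a d) b)) d = b := by
      rw [Equiv.trans_apply, Equiv.swap_apply_left]
    simp only [List.map_cons, List.map_nil, e1, e2]

theorem image_eq (u : List ℕ) :
    (range u.length).image (fun i => u.getD i 0) = u.toFinset := by
  ext x
  simp only [mem_image, mem_range, List.mem_toFinset, List.mem_iff_getElem]
  constructor
  · rintro ⟨i, hi, rfl⟩
    exact ⟨i, hi, by simp [hi]⟩
  · rintro ⟨i, hi, rfl⟩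
    exact ⟨i, hi, by simp [hi]⟩

theorem lower {a b : ℕ} (hab : a ≠ b) {k r : ℕ} (hr : 5 ≤ r) (n : ℕ) :
    ∃ u : List ℕ, u.length = r * n ∧ ¬ Contains u [a, b, b, a] ∧ ArithSparse k r u ∧
      u.toFinset.card ≤ n := by
  refine ⟨(List.range (r * n)).map (· / r), by simp, ?_, ?_, ?_⟩
  · rintro ⟨w, hw, β, hβ⟩
    have hs : ((List.range (r * n)).map (· / r)).Pairwise (· ≤ ·) := by
      rw [List.pairwise_map]
      exact List.pairwise_lt_range.imp (fun h => Nat.div_le_div_right h.le)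
    have hsw := hs.sublist hw
    have hwl : w.length = 4 := by
      have := congrArg List.length hβ
      simpa using this.symm
    obtain ⟨c, d, d', c', rfl⟩ : ∃ c d d' c', w = [c, d, d', c'] := by
      rcases w with _ | ⟨c, _ | ⟨d, _ | ⟨d', _ | ⟨c', _ | ⟨e, w⟩⟩⟩⟩⟩
      all_goals simp at hwl
      exact ⟨c, d, d', c', rfl⟩
    simp only [List.map_cons, List.map_nil, List.cons.injEq, and_true] at hβ
    obtain ⟨h1, h2, h3, h4⟩ := hβ
    have e1 : c = c' := β.injective (h1.symm.trans h4)
    simp only [List.pairwise_cons, List.mem_cons] at hsw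
    have q1 : c ≤ d := hsw.1 d (by simp)
    have q2 : d ≤ c' := hsw.2.1 c' (by simp)
    have : c = d := by omega
    exact hab (by rw [h1, h2, this])
  · intro j s t hst htk hlen
    rw [List.length_map, List.length_range] at hlen
    have hlt : j + s * r < r * n := by
      have := Nat.mul_le_mul_right r hst.le
      omega
    rw [List.getD_eq_getElem _ _ (by simpa using hlt),
      List.getD_eq_getElem _ _ (by simpa using hlen)]
    simp only [List.getElem_map, List.getElem_range]
    rw [Nat.add_mul_div_right _ _ (by omega), Nat.add_mul_div_right _ _ (by omega)]
    omega
  · have : ((List.range (r * n)).map (· / r)).toFinset ⊆ range n := by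
      intro x hx
      simp only [List.mem_toFinset, List.mem_map, List.mem_range] at hx
      obtain ⟨y, hy, rfl⟩ := hx
      rw [mem_range]
      exact Nat.div_lt_of_lt_mul hy
    simpa using Finset.card_le_card this

end AbbaProof

theorem stmt_15 (a b : ℕ) (hab : a ≠ b) (k r : ℕ) (hk : 2 ≤ k) (hr : 5 ≤ r) :
    ∀ n : ℕ, 1 ≤ n → Ex [a, b, b, a] k r n = r * n := by
  intro n _
  apply IsGreatest.csSup_eq
  refine ⟨AbbaProof.lower hab hr n, ?_⟩
  rintro l ⟨u, rfl, h1, h2, h3⟩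
  have := AbbaProof.upper hr (AbbaProof.free_of hab h1) (fun j hj => by
    have := h2 j 0 1 (by omega) (by omega) (by omega)
    simpa using this)
  rw [AbbaProof.image_eq] at this
  exact this.trans (Nat.mul_le_mul_left r h3)
end

section
/- Let a ≠ b be two letters, k ≥ 2, r ≥ 5 and n ≥ 1. Then every abba-free, (k,r)-sparse sequence u with ||u|| ≤ n and |u| = r·n is isomorphic to the sequence 1^r 2^r ... n^r (i.e. u consists of n blocks, each a distinct letter repeated r times). -/
/-- The sequence `1^r 2^r ⋯ n^r`. -/
def Blocks (n r : ℕ) : List ℕ := ((List.range n).map (fun i => List.replicate r (i+1))).flatten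


namespace S16

def Free (f : ℕ → ℕ) (L : ℕ) : Prop :=
  ∀ p q s t, p < q → q < s → s < t → t < L → f p = f t → f q = f s → f p = f q

def Sp (f : ℕ → ℕ) (r L : ℕ) : Prop := ∀ j, j + r < L → f j ≠ f (j + r)

def Occ (f : ℕ → ℕ) (L x : ℕ) : Finset ℕ := (Finset.range L).filter (fun p => f p = x)

theorem mem_Occ {f : ℕ → ℕ} {L x p : ℕ} : p ∈ Occ f L x ↔ p < L ∧ f p = x := by
  simp [Occ]

/-- first occurrence -/
noncomputable def Fst (f : ℕ → ℕ) (L x : ℕ) : ℕ := sInf {p | p < L ∧ f p = x}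

theorem Fst_spec {f : ℕ → ℕ} {L x p : ℕ} (h : p < L) (hx : f p = x) :
    Fst f L x < L ∧ f (Fst f L x) = x ∧ Fst f L x ≤ p := by
  have hne : ({p | p < L ∧ f p = x} : Set ℕ).Nonempty := ⟨p, h, hx⟩
  have h1 := Nat.sInf_mem hne
  exact ⟨h1.1, h1.2, Nat.sInf_le ⟨h, hx⟩⟩

/-- position `p` lies in the interval spanned by the letter `x` -/
def In (f : ℕ → ℕ) (L x p : ℕ) : Prop := Fst f L x ≤ p ∧ ∃ j, j < L ∧ p ≤ j ∧ f j = x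

theorem three {f : ℕ → ℕ} {L x : ℕ} (h : 3 ≤ (Occ f L x).card) :
    ∃ a b c, a < b ∧ b < c ∧ c < L ∧ f a = x ∧ f b = x ∧ f c = x := by
  let e := (Occ f L x).orderEmbOfFin rfl
  have hm : ∀ i, e i ∈ Occ f L x := fun i => Finset.orderEmbOfFin_mem _ rfl i
  refine ⟨e ⟨0, by omega⟩, e ⟨1, by omega⟩, e ⟨2, by omega⟩, ?_, ?_, ?_, ?_, ?_, ?_⟩
  · exact e.strictMono (by simp [Fin.lt_def])
  · exact e.strictMono (by simp [Fin.lt_def])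
  · exact (mem_Occ.1 (hm _)).1
  all_goals exact (mem_Occ.1 (hm _)).2

theorem star {f : ℕ → ℕ} {L x y z j : ℕ} (hf : Free f L)
    (hxy : Fst f L x < Fst f L y) (hyz : Fst f L y < Fst f L z)
    (hj : j < L) (hjx : f j = x) (hzj : Fst f L z ≤ j)
    (hy : 3 ≤ (Occ f L y).card) (hz : 3 ≤ (Occ f L z).card) : False := by
  obtain ⟨y1, y2, y3, hy12, hy23, hy3, ey1, ey2, ey3⟩ := three hy
  obtain ⟨z1, z2, z3, hz12, hz23, hz3, ez1, ez2, ez3⟩ := three hz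
  obtain ⟨fx1, fx2, fx3⟩ := Fst_spec hj hjx
  obtain ⟨fy1, fy2, fy3⟩ := Fst_spec (by omega : y1 < L) ey1
  obtain ⟨fz1, fz2, fz3⟩ := Fst_spec (by omega : z1 < L) ez1
  have hnxy : x ≠ y := by rintro rfl; omega
  have hnyz : y ≠ z := by rintro rfl; omega
  have hnxz : x ≠ z := by rintro rfl; omega
  have hj2 : j < y2 := by
    by_contra hc
    have hne : y2 ≠ j := by rintro rfl; exact hnxy (hjx.symm.trans ey2)
    have := hf (Fst f L x) y1 y2 j (by omega) hy12 (by omega) hj (by rw [fx2, hjx]) (by rw [ey1, ey2])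
    rw [fx2, ey1] at this; exact hnxy this
  have hz3y : z3 < y3 := by
    by_contra hc
    have hne : y3 ≠ z3 := by rintro rfl; exact hnyz (ey3.symm.trans ez3)
    have := hf (Fst f L z) y2 y3 z3 (by omega) hy23 (by omega) hz3 (by rw [fz2, ez3]) (by rw [ey2, ey3])
    rw [fz2, ey2] at this; exact hnyz this.symm
  have := hf (Fst f L y) z1 z2 y3 (by omega) hz12 (by omega) hy3 (by rw [fy2, ey3]) (by rw [ez1, ez2])
  rw [fy2, ez1] at this; exact hnyz this

theorem Fst_inj {f : ℕ → ℕ} {L x y p q : ℕ} (hp : p < L) (hx : f p = x) (hq : q < L) (hy : f q = y)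
    (h : Fst f L x = Fst f L y) : x = y := by
  rw [← (Fst_spec hp hx).2.1, ← (Fst_spec hq hy).2.1, h]

theorem exOcc {f : ℕ → ℕ} {L x : ℕ} (h : 3 ≤ (Occ f L x).card) : ∃ p, p < L ∧ f p = x := by
  obtain ⟨a, b, c, _, _, h3, _, _, h4⟩ := three h
  exact ⟨c, h3, h4⟩

/-- a position lies in at most two intervals of letters of multiplicity at least 3 -/
theorem le_two {f : ℕ → ℕ} {L : ℕ} (hf : Free f L) (p : ℕ) (T : Finset ℕ)
    (hT : ∀ x ∈ T, 3 ≤ (Occ f L x).card ∧ In f L x p) : T.card ≤ 2 := by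
  by_contra hc
  have hinj : Set.InjOn (Fst f L) T := by
    intro x hx y hy h
    obtain ⟨a, ha, ha'⟩ := exOcc (hT x hx).1
    obtain ⟨b, hb, hb'⟩ := exOcc (hT y hy).1
    exact Fst_inj ha ha' hb hb' h
  have hcard : (T.image (Fst f L)).card = T.card := Finset.card_image_of_injOn hinj
  let e := (T.image (Fst f L)).orderEmbOfFin rfl
  have hm : ∀ i, e i ∈ T.image (Fst f L) := fun i => Finset.orderEmbOfFin_mem _ rfl i
  obtain ⟨x, hx, ex⟩ := Finset.mem_image.1 (hm ⟨0, by omega⟩)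
  obtain ⟨y, hy, ey⟩ := Finset.mem_image.1 (hm ⟨1, by omega⟩)
  obtain ⟨z, hz, ez⟩ := Finset.mem_image.1 (hm ⟨2, by omega⟩)
  have h1 : Fst f L x < Fst f L y := by
    rw [ex, ey]; exact e.strictMono (by simp [Fin.lt_def])
  have h2 : Fst f L y < Fst f L z := by
    rw [ey, ez]; exact e.strictMono (by simp [Fin.lt_def])
  obtain ⟨hx3, hxF, j, hj, hpj, hjx⟩ := hT x hx
  have := (hT z hz).2.1
  exact star hf h1 h2 hj hjx (by omega) (hT y hy).1 (hT z hz).1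

/-- each other letter occurs at most once in the interval of `x` -/
theorem once {f : ℕ → ℕ} {L x p q : ℕ} (hf : Free f L) (hp : In f L x p) (hq : In f L x q)
    (hpx : f p ≠ x) (h : f p = f q) : p = q := by
  have key : ∀ p q, In f L x p → In f L x q → f p ≠ x → f p = f q → ¬ p < q := by
    intro p q hp hq hpx h hlt
    obtain ⟨h1, _⟩ := hp
    obtain ⟨h2, j, hj, hqj, hjx⟩ := hq
    obtain ⟨fx1, fx2, fx3⟩ := Fst_spec hj hjx
    have hne : Fst f L x ≠ p := by intro hh; rw [hh] at fx2; exact hpx fx2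
    have hne2 : q ≠ j := by rintro rfl; exact hpx (h.trans hjx)
    have := hf (Fst f L x) p q j (by omega) hlt (by omega) hj (by rw [fx2, hjx]) h
    rw [fx2] at this; exact hpx this.symm
  have h1 := key p q hp hq hpx h
  have h2 := key q p hq hp (h ▸ hpx) h.symm
  omega

/-- at most two positions of other letters of multiplicity `≥ 3` in the interval of `x` -/
theorem others_le_two {f : ℕ → ℕ} {L x : ℕ} (hf : Free f L) (hx : 3 ≤ (Occ f L x).card)
    (T : Finset ℕ)
    (hT : ∀ p ∈ T, p < L ∧ In f L x p ∧ f p ≠ x ∧ 3 ≤ (Occ f L (f p)).card) : T.card ≤ 2 := by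
  classical
  obtain ⟨a, ha, hax⟩ := exOcc hx
  have hsplit := Finset.card_filter_add_card_filter_not (s := T) (fun p => Fst f L (f p) < Fst f L x)
  have hlt : ∀ p ∈ T, ∀ q ∈ T, Fst f L (f p) < Fst f L x → Fst f L (f q) < Fst f L x →
      ¬ Fst f L (f p) < Fst f L (f q) := by
    intro p hp q hq h1 h2 h3
    obtain ⟨hpL, hpI, _, hp3⟩ := hT p hp
    obtain ⟨hqL, hqI, _, hq3⟩ := hT q hq
    exact star hf h3 h2 hpL rfl hpI.1 hq3 hx
  have hgt : ∀ p ∈ T, ∀ q ∈ T, Fst f L x < Fst f L (f p) →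
      ¬ Fst f L (f p) < Fst f L (f q) := by
    intro p hp q hq h1 h3
    obtain ⟨hpL, hpI, _, hp3⟩ := hT p hp
    obtain ⟨hqL, ⟨_, j, hj, hqj, hjx⟩, _, hq3⟩ := hT q hq
    have := (Fst_spec (f := f) hqL rfl).2.2
    exact star hf h1 h3 hj hjx (by omega) hp3 hq3
  have heq : ∀ p ∈ T, ∀ q ∈ T, Fst f L (f p) = Fst f L (f q) → p = q := by
    intro p hp q hq h
    obtain ⟨hpL, hpI, hpx, _⟩ := hT p hp
    obtain ⟨hqL, hqI, _, _⟩ := hT q hq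
    exact once hf hpI hqI hpx (Fst_inj hpL rfl hqL rfl h)
  have hne : ∀ p ∈ T, Fst f L (f p) ≠ Fst f L x := by
    intro p hp h
    obtain ⟨hpL, hpI, hpx, _⟩ := hT p hp
    exact hpx (Fst_inj hpL rfl ha hax h)
  have c1 : (T.filter (fun p => Fst f L (f p) < Fst f L x)).card ≤ 1 := by
    rw [Finset.card_le_one]
    intro p hp q hq
    simp only [Finset.mem_filter] at hp hq
    have h1 := hlt p hp.1 q hq.1 hp.2 hq.2
    have h2 := hlt q hq.1 p hp.1 hq.2 hp.2
    exact heq p hp.1 q hq.1 (by omega)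
  have c2 : (T.filter (fun p => ¬ Fst f L (f p) < Fst f L x)).card ≤ 1 := by
    rw [Finset.card_le_one]
    intro p hp q hq
    simp only [Finset.mem_filter] at hp hq
    have n1 := hne p hp.1
    have n2 := hne q hq.1
    have h1 := hgt p hp.1 q hq.1 (by omega)
    have h2 := hgt q hq.1 p hp.1 (by omega)
    exact heq p hp.1 q hq.1 (by omega)
  omega

theorem window {f : ℕ → ℕ} {r L a N x : ℕ} (hs : Sp f r L) (hr : 0 < r) (hN : N ≤ 2 * r)
    (haN : a + N ≤ L) : ((Finset.Ico a (a + N)).filter (fun p => f p = x)).card ≤ r := by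
  rw [← Finset.card_range r]
  apply Finset.card_le_card_of_injOn (fun p => if p < a + r then p - a else p - a - r)
  · intro p hp
    simp only [Finset.coe_filter, Finset.mem_Ico, Set.mem_setOf_eq] at hp
    simp only [Finset.coe_range, Set.mem_Iio]
    split_ifs <;> omega
  · intro p hp q hq h
    simp only [Finset.coe_filter, Finset.mem_Ico, Set.mem_setOf_eq] at hp hq
    simp only at h
    by_contra hne
    have key : q = p + r ∨ p = q + r := by
      split_ifs at h <;> omega
    rcases key with rfl | rfl
    · exact hs p (by omega) (hp.2.trans hq.2.symm)
    · exact hs q (by omega) (hq.2.trans hp.2.symm)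

theorem ico_split (f : ℕ → ℕ) (a N x : ℕ) :
    ((Finset.Ico a (a + N)).filter (fun p => f p = x)).card +
    ((Finset.Ico a (a + N)).filter (fun p => f p ≠ x)).card = N := by
  have := Finset.card_filter_add_card_filter_not (s := Finset.Ico a (a + N)) (fun p => f p = x)
  simpa using this

theorem many_others {f : ℕ → ℕ} {r L a N x : ℕ} (hs : Sp f r L) (hr : 0 < r)
    (haN : a + N ≤ L) (hc : r < ((Finset.Ico a (a + N)).filter (fun p => f p = x)).card) :
    r ≤ ((Finset.Ico a (a + N)).filter (fun p => f p ≠ x)).card := by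
  have hN : 2 * r < N := by
    by_contra h
    have := window (x := x) hs hr (by omega : N ≤ 2 * r) haN
    omega
  have h1 := window (x := x) hs hr (le_refl (2 * r)) (by omega : a + 2 * r ≤ L)
  have h2 := ico_split f a (2 * r) x
  have h3 : ((Finset.Ico a (a + 2 * r)).filter (fun p => f p ≠ x)).card ≤
      ((Finset.Ico a (a + N)).filter (fun p => f p ≠ x)).card := by
    apply Finset.card_le_card
    intro p hp
    simp only [Finset.mem_filter, Finset.mem_Ico] at hp ⊢
    exact ⟨by omega, hp.2⟩
  omega

theorem le_add_others {f : ℕ → ℕ} {r L a N x : ℕ} (hs : Sp f r L)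
    (haN : a + N ≤ L) :
    ((Finset.Ico a (a + N)).filter (fun p => f p = x)).card ≤
    r + ((Finset.Ico a (a + N)).filter (fun p => f p ≠ x)).card := by
  have h0 := Finset.card_filter_add_card_filter_not
    (s := (Finset.Ico a (a + N)).filter (fun p => f p = x)) (fun p => p + r < a + N)
  have h1 : (((Finset.Ico a (a + N)).filter (fun p => f p = x)).filter
      (fun p => p + r < a + N)).card ≤
      ((Finset.Ico a (a + N)).filter (fun p => f p ≠ x)).card := by
    apply Finset.card_le_card_of_injOn (fun p => p + r)
    · intro p hp
      simp only [Finset.coe_filter, Finset.mem_Ico, Set.mem_setOf_eq, Finset.mem_filter] at hp ⊢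
      refine ⟨by omega, ?_⟩
      have := hs p (by omega)
      rw [hp.1.2] at this
      exact this.symm
    · intro p _ q _ h
      simpa using h
  have h2 : (((Finset.Ico a (a + N)).filter (fun p => f p = x)).filter
      (fun p => ¬ p + r < a + N)).card ≤ r := by
    have : (((Finset.Ico a (a + N)).filter (fun p => f p = x)).filter
      (fun p => ¬ p + r < a + N)) ⊆ Finset.Ico (a + N - r) (a + N) := by
      intro p hp
      simp only [Finset.mem_Ico, Finset.mem_filter] at hp ⊢
      omega
    have := Finset.card_le_card this
    simp only [Nat.card_Ico] at this
    omega
  omega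

open Classical in
/-- positions of letters of multiplicity `i` in the interval of `x` -/
noncomputable def E (f : ℕ → ℕ) (L i x : ℕ) : Finset ℕ :=
  (Finset.range L).filter (fun p => (Occ f L (f p)).card = i ∧ In f L x p)

theorem In_of {f : ℕ → ℕ} {L x i j p : ℕ} (hj : j < L) (hij : i ≤ p) (hpj : p ≤ j)
    (hi : f i = x) (hjx : f j = x) : In f L x p :=
  ⟨(Fst_spec (by omega : i < L) hi).2.2.trans hij, j, hj, hpj, hjx⟩

theorem last {f : ℕ → ℕ} {L x p : ℕ} (hp : p < L) (hx : f p = x) :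
    ∃ b, b < L ∧ f b = x ∧ ∀ q, q < L → f q = x → q ≤ b := by
  have hne : (Occ f L x).Nonempty := ⟨p, mem_Occ.2 ⟨hp, hx⟩⟩
  obtain ⟨h1, h2⟩ := mem_Occ.1 (Finset.max'_mem _ hne)
  exact ⟨_, h1, h2, fun q hq hqx => Finset.le_max' _ _ (mem_Occ.2 ⟨hq, hqx⟩)⟩

theorem heavy12 {f : ℕ → ℕ} {r L x : ℕ} (hf : Free f L) (hs : Sp f r L) (hr : 5 ≤ r)
    (hx : r < (Occ f L x).card) : 3 ≤ (E f L 1 x).card + (E f L 2 x).card := by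
  classical
  obtain ⟨p0, hp0, hp0x⟩ := exOcc (by omega : 3 ≤ (Occ f L x).card)
  obtain ⟨b, hb, hbx, hbmax⟩ := last hp0 hp0x
  obtain ⟨ha, hax, hab⟩ := Fst_spec hb hbx
  set a := Fst f L x with hadef
  obtain ⟨N, hN⟩ : ∃ N, a + N = b + 1 := ⟨b + 1 - a, by omega⟩
  have hOcc : Occ f L x ⊆ (Finset.Ico a (a + N)).filter (fun p => f p = x) := by
    intro p hp
    obtain ⟨h1, h2⟩ := mem_Occ.1 hp
    simp only [Finset.mem_filter, Finset.mem_Ico]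
    have := hbmax p h1 h2
    have := (Fst_spec h1 h2).2.2
    omega
  have hc := Finset.card_le_card hOcc
  have hO := many_others hs (by omega) (by omega : a + N ≤ L) (lt_of_lt_of_le hx hc)
  set O := (Finset.Ico a (a + N)).filter (fun p => f p ≠ x) with hOdef
  have hsub : O ⊆ (E f L 1 x ∪ E f L 2 x) ∪ O.filter (fun p => 3 ≤ (Occ f L (f p)).card) := by
    intro p hp
    have hp' := hp
    simp only [hOdef, Finset.mem_filter, Finset.mem_Ico] at hp'
    have hpL : p < L := by omega
    have hIn : In f L x p := In_of hb hp'.1.1 (by omega) hax hbx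
    have hpos : 0 < (Occ f L (f p)).card := Finset.card_pos.2 ⟨p, mem_Occ.2 ⟨hpL, rfl⟩⟩
    simp only [Finset.mem_union, E, Finset.mem_filter, Finset.mem_range]
    by_cases h3 : 3 ≤ (Occ f L (f p)).card
    · exact Or.inr ⟨hp, h3⟩
    · left
      by_cases h1 : (Occ f L (f p)).card = 1
      · exact Or.inl ⟨hpL, h1, hIn⟩
      · exact Or.inr ⟨hpL, by omega, hIn⟩
  have h2 : (O.filter (fun p => 3 ≤ (Occ f L (f p)).card)).card ≤ 2 := by
    apply others_le_two hf (by omega : 3 ≤ (Occ f L x).card)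
    intro p hp
    simp only [hOdef, Finset.mem_filter, Finset.mem_Ico] at hp
    exact ⟨by omega, In_of hb hp.1.1.1 (by omega) hax hbx, hp.1.2, hp.2⟩
  have h3 := Finset.card_le_card hsub
  have h4 := Finset.card_union_le (E f L 1 x ∪ E f L 2 x) (O.filter (fun p => 3 ≤ (Occ f L (f p)).card))
  have h5 := Finset.card_union_le (E f L 1 x) (E f L 2 x)
  omega

theorem heavy3 {f : ℕ → ℕ} {r L x : ℕ} (hf : Free f L) (hs : Sp f r L) (hr : 5 ≤ r)
    (hx : r + 3 ≤ (Occ f L x).card) : r ≤ (E f L 1 x).card ∧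
    (Occ f L x).card ≤ r + 2 + (E f L 1 x).card := by
  obtain ⟨p0, hp0, hp0x⟩ := exOcc (by omega : 3 ≤ (Occ f L x).card)
  obtain ⟨b, hb, hbx, hbmax⟩ := last hp0 hp0x
  obtain ⟨ha, hax, hab⟩ := Fst_spec hb hbx
  set a := Fst f L x with hadef
  set O' := ((Occ f L x).erase a).erase b with hO'
  have hc1 := Finset.pred_card_le_card_erase (s := Occ f L x) (a := a)
  have hc2 := Finset.pred_card_le_card_erase (s := (Occ f L x).erase a) (a := b)
  have hOc : (Occ f L x).card ≤ O'.card + 2 := by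
    have h1 : (Occ f L x).card ≤ ((Occ f L x).erase a).card + 1 := by omega
    have h2 : ((Occ f L x).erase a).card ≤ O'.card + 1 := by rw [hO']; omega
    omega
  clear hc1 hc2
  have hne : O'.Nonempty := Finset.card_pos.1 (by omega)
  have hmem : ∀ p ∈ O', a < p ∧ p < b ∧ p < L ∧ f p = x := by
    intro p hp
    simp only [hO', Finset.mem_erase, mem_Occ] at hp
    have h1 := hbmax p hp.2.2.1 hp.2.2.2
    have h2 := (Fst_spec hp.2.2.1 hp.2.2.2).2.2
    refine ⟨by omega, by omega, hp.2.2⟩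
  obtain ⟨ha2, ha2b, ha2L, ha2x⟩ := hmem _ (Finset.min'_mem O' hne)
  obtain ⟨hb2, hb2b, hb2L, hb2x⟩ := hmem _ (Finset.max'_mem O' hne)
  have hmin : ∀ p ∈ O', O'.min' hne ≤ p := fun p hp => Finset.min'_le _ _ hp
  have hmax : ∀ p ∈ O', p ≤ O'.max' hne := fun p hp => Finset.le_max' _ _ hp
  have hle := hmin _ (Finset.max'_mem O' hne)
  generalize O'.min' hne = a2 at *
  generalize O'.max' hne = b2 at *
  obtain ⟨N, hN⟩ : ∃ N, a2 + N = b2 + 1 := ⟨b2 + 1 - a2, by omega⟩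
  have hsub : O' ⊆ (Finset.Ico a2 (a2 + N)).filter (fun p => f p = x) := by
    intro p hp
    simp only [Finset.mem_filter, Finset.mem_Ico]
    have := hmin p hp
    have := hmax p hp
    exact ⟨by omega, (hmem p hp).2.2.2⟩
  have hc := Finset.card_le_card hsub
  have hO := many_others hs (by omega) (by omega : a2 + N ≤ L) (by omega :
    r < ((Finset.Ico a2 (a2 + N)).filter (fun p => f p = x)).card)
  have hO2 := le_add_others (x := x) hs (by omega : a2 + N ≤ L)
  have hE : (Finset.Ico a2 (a2 + N)).filter (fun p => f p ≠ x) ⊆ E f L 1 x := by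
    intro p hp
    simp only [Finset.mem_filter, Finset.mem_Ico] at hp
    have hpL : p < L := by omega
    have hpa : p ≠ a2 := by rintro rfl; exact hp.2 ha2x
    have hpb : p ≠ b2 := by rintro rfl; exact hp.2 hb2x
    have hIn : In f L x p := In_of hb (by omega : a ≤ p) (by omega) hax hbx
    simp only [E, Finset.mem_filter, Finset.mem_range]
    refine ⟨hpL, ?_, hIn⟩
    rw [Finset.card_eq_one]
    refine ⟨p, ?_⟩
    ext q
    rw [mem_Occ, Finset.mem_singleton]
    constructor
    · rintro ⟨hq, hqp⟩
      by_contra hqne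
      by_cases hqI : a ≤ q ∧ q ≤ b
      · exact hqne (once hf (In_of hb hqI.1 hqI.2 hax hbx) hIn (hqp ▸ hp.2) hqp)
      · by_cases hqa : q < a
        · have := hf q a a2 p hqa ha2 (by omega) hpL hqp (by rw [hax, ha2x])
          rw [hqp, hax] at this; exact hp.2 this
        · have := hf p b2 b q (by omega) (by omega) (by omega) hq hqp.symm (by rw [hbx, hb2x])
          rw [hb2x] at this; exact hp.2 this
    · rintro rfl; exact ⟨hpL, rfl⟩
  have hEc := Finset.card_le_card hE
  omega

theorem charge {f : ℕ → ℕ} {r L x : ℕ} (hf : Free f L) (hs : Sp f r L) (hr : 5 ≤ r) :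
    3 * (Occ f L x).card ≤ 3 * r + 5 * (E f L 1 x).card + 2 * (E f L 2 x).card := by
  by_cases h1 : (Occ f L x).card ≤ r
  · omega
  by_cases h2 : r + 3 ≤ (Occ f L x).card
  · have := heavy3 hf hs hr h2
    omega
  · have := heavy12 hf hs hr (by omega : r < (Occ f L x).card)
    omega

/-- letters of multiplicity `i` -/
def S (f : ℕ → ℕ) (L i : ℕ) : Finset ℕ :=
  ((Finset.range L).image f).filter (fun x => (Occ f L x).card = i)

def Big (f : ℕ → ℕ) (L : ℕ) : Finset ℕ :=
  ((Finset.range L).image f).filter (fun x => 3 ≤ (Occ f L x).card)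

theorem sumE {f : ℕ → ℕ} {L : ℕ} (hf : Free f L) (i : ℕ) :
    ∑ x ∈ Big f L, (E f L i x).card ≤ 2 * (i * (S f L i).card) := by
  classical
  set P := (Finset.range L).filter (fun p => (Occ f L (f p)).card = i) with hP
  have hPc : P.card = i * (S f L i).card := by
    have h1 : ∀ p ∈ P, f p ∈ S f L i := by
      intro p hp
      simp only [hP, Finset.mem_filter, Finset.mem_range] at hp
      simp only [S, Finset.mem_filter, Finset.mem_image, Finset.mem_range]
      exact ⟨⟨p, hp.1, rfl⟩, hp.2⟩
    rw [Finset.card_eq_sum_card_fiberwise h1, mul_comm, ← smul_eq_mul, ← Finset.sum_const]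
    apply Finset.sum_congr rfl
    intro x hx
    simp only [S, Finset.mem_filter] at hx
    rw [← hx.2]
    congr 1
    ext p
    simp only [hP, Finset.mem_filter, mem_Occ, Finset.mem_range]
    constructor
    · rintro ⟨⟨h1, h2⟩, h3⟩; exact ⟨h1, h3⟩
    · rintro ⟨h1, h3⟩; exact ⟨⟨h1, by rw [h3, hx.2]⟩, h3⟩
  have h := Finset.sum_card_bipartiteAbove_eq_sum_card_bipartiteBelow (s := Big f L) (t := P)
    (fun x p => In f L x p)
  have h2 : ∀ x ∈ Big f L, (E f L i x).card =
      (Finset.bipartiteAbove (fun x p => In f L x p) P x).card := by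
    intro x _
    congr 1
    ext p
    simp only [E, Finset.bipartiteAbove, hP, Finset.mem_filter]
    tauto
  rw [Finset.sum_congr rfl h2, h, ← hPc, mul_comm, ← smul_eq_mul]
  apply Finset.sum_le_card_nsmul
  intro p _
  apply le_two hf p
  intro x hx
  simp only [Finset.bipartiteBelow, Big, Finset.mem_filter] at hx
  exact ⟨hx.1.2, hx.2⟩

theorem all_r {f : ℕ → ℕ} {r n L : ℕ} (hf : Free f L) (hs : Sp f r L) (hr : 5 ≤ r)
    (hL : L = r * n) (hn : ((Finset.range L).image f).card ≤ n) :
    ∀ p < L, (Occ f L (f p)).card = r := by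
  classical
  set X := (Finset.range L).image f with hX
  set m : ℕ → ℕ := fun x => (Occ f L x).card with hm
  have hsum : ∑ x ∈ X, m x = L := by
    have h1 : ∀ p ∈ Finset.range L, f p ∈ X := fun p hp => Finset.mem_image_of_mem _ hp
    have := Finset.card_eq_sum_card_fiberwise h1
    rw [Finset.card_range] at this
    exact this.symm
  have hpos : ∀ x ∈ X, 1 ≤ m x := by
    intro x hx
    obtain ⟨p, hp, hpx⟩ := Finset.mem_image.1 hx
    exact Finset.card_pos.2 ⟨p, mem_Occ.2 ⟨Finset.mem_range.1 hp, hpx⟩⟩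
  -- pointwise bound
  have hpt : ∀ x ∈ X, 3 * m x + (if m x = 1 then 12 else 0) + (if m x = 2 then 9 else 0) ≤
      3 * r + (if 3 ≤ m x then 5 * (E f L 1 x).card + 2 * (E f L 2 x).card else 0) := by
    intro x hx
    have := hpos x hx
    have hc := charge (x := x) hf hs hr
    change 3 * m x ≤ _ at hc
    split_ifs <;> omega
  have htot := Finset.sum_le_sum hpt
  rw [Finset.sum_add_distrib, Finset.sum_add_distrib, Finset.sum_add_distrib, ← Finset.mul_sum, hsum,
    ← Finset.sum_filter, ← Finset.sum_filter, ← Finset.sum_filter, Finset.sum_const, Finset.sum_const,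
    Finset.sum_const] at htot
  have hB : ∑ x ∈ X.filter (fun x => 3 ≤ m x), (5 * (E f L 1 x).card + 2 * (E f L 2 x).card)
      ≤ 10 * (S f L 1).card + 8 * (S f L 2).card := by
    rw [Finset.sum_add_distrib, ← Finset.mul_sum, ← Finset.mul_sum]
    have h1 := sumE hf 1
    have h2 := sumE hf 2
    change ∑ x ∈ X.filter (fun x => 3 ≤ m x), _ ≤ _ at h1
    change ∑ x ∈ X.filter (fun x => 3 ≤ m x), _ ≤ _ at h2
    omega
  change 3 * L + (S f L 1).card • 12 + (S f L 2).card • 9 ≤ _ at htot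
  simp only [smul_eq_mul] at htot
  have hXr : X.card * (3 * r) ≤ 3 * L := by
    rw [hL]; nlinarith
  have hS1 : (S f L 1).card = 0 := by omega
  have hS2 : (S f L 2).card = 0 := by omega
  have hempty : ∀ i, (S f L i).card = 0 → ∀ x, (E f L i x).card = 0 := by
    intro i hi x
    rw [Finset.card_eq_zero] at hi ⊢
    rw [Finset.eq_empty_iff_forall_notMem] at hi ⊢
    intro p hp
    simp only [E, Finset.mem_filter] at hp
    exact hi (f p) (Finset.mem_filter.2 ⟨Finset.mem_image_of_mem _ hp.1, hp.2.1⟩)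
  have hle : ∀ x ∈ X, m x ≤ r := by
    intro x _
    have hc := charge (x := x) hf hs hr
    rw [hempty 1 hS1, hempty 2 hS2] at hc
    change 3 * m x ≤ _ at hc
    omega
  have hge : ∑ x ∈ X, m x = ∑ x ∈ X, r := by
    apply le_antisymm (Finset.sum_le_sum hle)
    rw [hsum, Finset.sum_const, smul_eq_mul]
    nlinarith
  have := (Finset.sum_eq_sum_iff_of_le hle).1 hge
  intro p hp
  exact this (f p) (Finset.mem_image_of_mem _ (Finset.mem_range.2 hp))

theorem step {f : ℕ → ℕ} {r n L : ℕ} (hf : Free f L) (hs : Sp f r L) (hr : 5 ≤ r)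
    (hL : L = r * n) (hall : ∀ p < L, (Occ f L (f p)).card = r) (q : ℕ) (hq : q ≤ n) :
    ∀ p < q * r, ∀ p' < L, (f p = f p' ↔ p / r = p' / r) := by
  induction q with
  | zero => intro p hp; omega
  | succ q ih =>
    have ih := ih (by omega)
    have hr0 : 0 < r := by omega
    have hqL : q * r + r ≤ L := by rw [hL]; nlinarith
    set a := q * r with ha
    have haL : a < L := by omega
    -- earlier letters do not occur later
    have hback : ∀ p, a ≤ p → p < L → a ≤ Fst f L (f p) := by
      intro p hap hp
      obtain ⟨h1, h2, h3⟩ := Fst_spec hp rfl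
      by_contra hlt
      have h4 := (ih _ (by omega) p hp).1 h2
      have h5 : Fst f L (f p) / r < q := (Nat.div_lt_iff_lt_mul hr0).2 (by omega)
      have h6 : q ≤ p / r := (Nat.le_div_iff_mul_le hr0).2 hap
      omega
    have hFa : Fst f L (f a) = a := le_antisymm (Fst_spec haL rfl).2.2 (hback a le_rfl haL)
    obtain ⟨b, hb, hbx, hbmax⟩ := last haL rfl
    have hab : a ≤ b := hbmax a haL rfl
    obtain ⟨N, hN⟩ : ∃ N, a + N = b + 1 := ⟨b + 1 - a, by omega⟩
    have hOcc : Occ f L (f a) = (Finset.Ico a (a + N)).filter (fun p => f p = f a) := by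
      ext p
      simp only [mem_Occ, Finset.mem_filter, Finset.mem_Ico]
      constructor
      · rintro ⟨h1, h2⟩
        have h3 := hbmax p h1 h2
        have h4 := (Fst_spec h1 h2).2.2
        exact ⟨by omega, h2⟩
      · rintro ⟨h1, h2⟩; exact ⟨by omega, h2⟩
    have hsplit := ico_split f a N (f a)
    rw [← hOcc, hall a haL] at hsplit
    have hO1 : ((Finset.Ico a (a + N)).filter (fun p => f p ≠ f a)).card ≤ 1 := by
      rw [Finset.card_le_one]
      have key : ∀ p p', a ≤ p → p < a + N → f p ≠ f a → a ≤ p' → p' < a + N → f p' ≠ f a →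
          ¬ Fst f L (f p) < Fst f L (f p') := by
        intro p p' h1 h2 h3 h4 h5 h6 h7
        have h8 := hback p h1 (by omega)
        have h9 : Fst f L (f p) ≠ a := by
          intro h
          apply h3
          rw [← hFa] at h
          exact Fst_inj (by omega : p < L) rfl haL rfl h
        have h10 := (Fst_spec (f := f) (by omega : p' < L) rfl).2.2
        exact star hf (by omega : Fst f L (f a) < Fst f L (f p)) h7 hb hbx (by omega)
          (by rw [hall p (by omega)]; omega) (by rw [hall p' (by omega)]; omega)
      intro p hp p' hp'
      simp only [Finset.mem_filter, Finset.mem_Ico] at hp hp'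
      have k1 := key p p' hp.1.1 hp.1.2 hp.2 hp'.1.1 hp'.1.2 hp'.2
      have k2 := key p' p hp'.1.1 hp'.1.2 hp'.2 hp.1.1 hp.1.2 hp.2
      exact once hf (In_of hb hp.1.1 (by omega) rfl hbx) (In_of hb hp'.1.1 (by omega) rfl hbx)
        hp.2 (Fst_inj (by omega) rfl (by omega) rfl (by omega : Fst f L (f p) = Fst f L (f p')))
    have hNr : N = r := by
      by_contra hne
      have hbr : b = a + r := by omega
      have := hs a (by omega)
      rw [← hbr] at this
      exact this hbx.symm
    have hO0 : ((Finset.Ico a (a + N)).filter (fun p => f p ≠ f a)) = ∅ := by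
      rw [← Finset.card_eq_zero]; omega
    have hdiv : ∀ p, p / r = q ↔ a ≤ p ∧ p < a + r := by
      intro p
      rw [Nat.div_eq_iff hr0]
      omega
    have hblock : ∀ p, p < L → (f p = f a ↔ p / r = q) := by
      intro p hp
      rw [hdiv]
      constructor
      · intro h
        have := hbmax p hp h
        have := (Fst_spec hp h).2.2
        omega
      · intro h
        by_contra hne
        have : p ∈ ((Finset.Ico a (a + N)).filter (fun p => f p ≠ f a)) := by
          simp only [Finset.mem_filter, Finset.mem_Ico]; exact ⟨by omega, hne⟩
        rw [hO0] at this; simp at this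
    intro p hp p' hp'
    rw [Nat.succ_mul] at hp
    by_cases hpa : p < a
    · exact ih p hpa p' hp'
    · have h1 := (hdiv p).2 (by omega)
      have h2 := (hblock p (by omega)).2 h1
      rw [h1, h2, eq_comm, hblock p' hp', eq_comm]

theorem perm_ext (g : ℕ → ℕ) (h : ℕ → ℕ) (n : ℕ) (hg : ∀ i < n, ∀ j < n, g i = g j → i = j)
    (hh : ∀ i < n, ∀ j < n, h i = h j → i = j) :
    ∃ β : ℕ ≃ ℕ, ∀ i < n, β (g i) = h i := by
  induction n with
  | zero => exact ⟨Equiv.refl _, by intro i hi; omega⟩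
  | succ n ih =>
    obtain ⟨β, hβ⟩ := ih (fun i hi j hj => hg i (by omega) j (by omega))
      (fun i hi j hj => hh i (by omega) j (by omega))
    refine ⟨β.trans (Equiv.swap (β (g n)) (h n)), ?_⟩
    intro i hi
    rw [Equiv.trans_apply]
    by_cases hin : i = n
    · subst hin; exact Equiv.swap_apply_left _ _
    · rw [hβ i (by omega)]
      apply Equiv.swap_apply_of_ne_of_ne
      · rw [← hβ i (by omega)]
        intro h
        exact hin (hg i hi n (by omega) (β.injective h))
      · intro h
        exact hin (hh i hi n (by omega) h)

theorem free_of {u : List ℕ} {a b : ℕ} (hab : a ≠ b) (hfree : ¬ Contains u [a, b, b, a]) :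
    Free (fun i => u.getD i 0) u.length := by
  intro p q s t hpq hqs hst ht h1 h2
  by_contra hne
  apply hfree
  simp only at h1 h2 hne
  refine ⟨[u.getD p 0, u.getD q 0, u.getD s 0, u.getD t 0], ?_, ?_⟩
  · have := List.map_getElem_sublist (l := u)
      (is := [⟨p, by omega⟩, ⟨q, by omega⟩, ⟨s, by omega⟩, ⟨t, by omega⟩])
      (by simp; omega)
    have e : ∀ i (hi : i < u.length), u.getD i 0 = u[i] := by
      intro i hi; simp [hi]
    rw [e p (by omega), e q (by omega), e s (by omega), e t (by omega)]
    simpa using this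
  · obtain ⟨β, hβ⟩ := perm_ext (fun i => if i = 0 then u.getD p 0 else u.getD q 0)
      (fun i => if i = 0 then a else b) 2
      (by intro i hi j hj h
          split_ifs at h <;> first | omega | exact absurd h hne | exact absurd h.symm hne)
      (by intro i hi j hj h
          split_ifs at h <;> first | omega)
    have b0 := hβ 0 (by omega)
    have b1 := hβ 1 (by omega)
    simp only [if_true, one_ne_zero, if_false] at b0 b1
    refine ⟨β, ?_⟩
    rw [← h1, ← h2]
    simp only [List.map_cons, List.map_nil, b0, b1]

theorem blocks_eq (n r : ℕ) (hr : 0 < r) :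
    Blocks n r = (List.range (n * r)).map (fun p => p / r + 1) := by
  induction n with
  | zero => simp [Blocks]
  | succ n ih =>
    have h : Blocks (n + 1) r = Blocks n r ++ List.replicate r (n + 1) := by
      simp [Blocks, List.range_succ]
    rw [h, ih, Nat.succ_mul, List.range_add, List.map_append]
    congr 1
    rw [List.map_map]
    symm
    rw [List.eq_replicate_iff]
    refine ⟨by simp, ?_⟩
    intro c hc
    simp only [List.mem_map, List.mem_range, Function.comp] at hc
    obtain ⟨i, hi, rfl⟩ := hc
    congr 1
    rw [Nat.div_eq_iff hr]
    omega

end S16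

theorem stmt_16 (a b : ℕ) (hab : a ≠ b) (k r n : ℕ) (hk : 2 ≤ k) (hr : 5 ≤ r)
    (hn : 1 ≤ n) (u : List ℕ) (hfree : ¬ Contains u [a, b, b, a])
    (hsparse : ArithSparse k r u) (hcard : u.toFinset.card ≤ n)
    (hlen : u.length = r * n) :
    Isomorphic u (Blocks n r) := by
  have hf := S16.free_of hab hfree
  set f : ℕ → ℕ := fun i => u.getD i 0 with hfdef
  have hfe : ∀ i (hi : i < u.length), f i = u[i] := by
    intro i hi; simp [hfdef, hi]
  have hs : S16.Sp f r u.length := by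
    intro j hj
    have := hsparse j 0 1 (by omega) (by omega) (by omega)
    simpa [hfdef] using this
  have himg : ((Finset.range u.length).image f).card ≤ n := by
    refine le_trans (Finset.card_le_card ?_) hcard
    intro x hx
    obtain ⟨p, hp, rfl⟩ := Finset.mem_image.1 hx
    rw [hfe p (Finset.mem_range.1 hp)]
    simp
  have hall := S16.all_r hf hs hr hlen himg
  have hstep := S16.step hf hs hr hlen hall n le_rfl
  have hr0 : 0 < r := by omega
  have hlen' : u.length = n * r := by rw [hlen, mul_comm]
  have hlt : ∀ i < n, i * r < n * r := fun i hi => Nat.mul_lt_mul_of_pos_right hi hr0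
  obtain ⟨β, hβ⟩ := S16.perm_ext (fun i => f (i * r)) (fun i => i + 1) n
    (by intro i hi j hj h
        have := (hstep (i * r) (hlt i hi) (j * r) (by rw [hlen']; exact hlt j hj)).1 h
        rwa [Nat.mul_div_cancel _ hr0, Nat.mul_div_cancel _ hr0] at this)
    (by intro i hi j hj h; omega)
  refine ⟨β, ?_⟩
  rw [S16.blocks_eq n r hr0]
  apply List.ext_getElem
  · simp [hlen']
  · intro p h1 h2
    simp only [List.length_map, List.length_range] at h1 h2
    simp only [List.getElem_map, List.getElem_range]
    rw [← hfe p h2]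
    have hpn : p / r < n := (Nat.div_lt_iff_lt_mul hr0).2 h1
    have e1 : f p = f (p / r * r) := by
      refine (hstep p h1 (p / r * r) (by rw [hlen']; exact hlt _ hpn)).2 ?_
      rw [Nat.mul_div_cancel _ hr0]
    rw [e1]
    exact (hβ (p / r) hpn).symm
end
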